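/- arXiv:1104.1412 — 2 statements merged into one kernel-verified Lean document; each statement's English description precedes it below -/
import Mathlib

section
/- Let M be a submanifold of a space form with second fundamental form α and nullity distribution 𝒩_p = {v ∈ T_pM : α(v, w) = 0 for all w ∈ T_pM}. On the open subset of M where the index of nullity dim 𝒩_p is locally constant, the distribution 𝒩 is smooth and autoparallel: if X and Y are vector fields tangent to 𝒩, then the Levi-Civita covariant derivative ∇_X Y is again tangent to 𝒩. Consequently, the maximal integral manifolds of 𝒩 on this open set are totally geodesic submanifolds of M. -/
noncomputable section

open Set

/-- The three model space forms: Euclidean space, the round sphere, hyperbolic space. -/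
inductive SpaceFormKind : Type
  | euclidean : SpaceFormKind
  | sphere : SpaceFormKind
  | hyperbolic : SpaceFormKind

/-- The sign of the `i`-th coordinate in the ambient bilinear form: for the hyperbolic case the
ambient linear space is the Lorentz space `ℝ^{D-1,1}` whose last coordinate is timelike. -/
def formSign (k : SpaceFormKind) (D : ℕ) (i : Fin D) : ℝ :=
  match k with
  | .hyperbolic => if (i : ℕ) + 1 = D then -1 else 1
  | _ => 1

/-- The ambient bilinear form: the Euclidean inner product in the euclidean and spherical cases,
the Lorentz (Minkowski) form in the hyperbolic case. -/
def aForm (k : SpaceFormKind) {D : ℕ} (x y : EuclideanSpace ℝ (Fin D)) : ℝ :=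
  ∑ i, formSign k D i * x i * y i

/-- The space form, realized inside its ambient linear space: all of `ℝ^D`, the unit sphere,
or the hyperboloid model of hyperbolic space in Lorentz space. -/
def spaceForm (k : SpaceFormKind) (D : ℕ) : Set (EuclideanSpace ℝ (Fin D)) :=
  match k with
  | .euclidean => Set.univ
  | .sphere => {x | aForm .sphere x x = 1}
  | .hyperbolic => {x | aForm .hyperbolic x x = -1 ∧ ∀ i : Fin D, (i : ℕ) + 1 = D → 0 < x i}

/-- The normal space of the space form itself inside the ambient linear space at a point `p`:
trivial in the euclidean case, and spanned by the position vector in the other two cases. -/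
def radialAt (k : SpaceFormKind) {D : ℕ} (p : EuclideanSpace ℝ (Fin D)) :
    Submodule ℝ (EuclideanSpace ℝ (Fin D)) :=
  match k with
  | .euclidean => ⊥
  | _ => Submodule.span ℝ {p}

/-- The tangent space of a subset `S ⊆ ℝ^D` at `p`: the span of all velocities at `0` of smooth
curves inside `S` passing through `p` at time `0`. -/
def TangentAt {D : ℕ} (S : Set (EuclideanSpace ℝ (Fin D))) (p : EuclideanSpace ℝ (Fin D)) :
    Submodule ℝ (EuclideanSpace ℝ (Fin D)) :=
  Submodule.span ℝ {v | ∃ c : ℝ → EuclideanSpace ℝ (Fin D),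
    ContDiff ℝ (⊤ : ℕ∞) c ∧ (∀ t, c t ∈ S) ∧ c 0 = p ∧ deriv c 0 = v}

/-- `φ : U → ℝ^D` is a (smooth, embedded) local parametrization of `S` around `p`. -/
structure IsLocalParam {D : ℕ} (S : Set (EuclideanSpace ℝ (Fin D))) (n : ℕ)
    (φ : EuclideanSpace ℝ (Fin n) → EuclideanSpace ℝ (Fin D))
    (U : Set (EuclideanSpace ℝ (Fin n))) (p : EuclideanSpace ℝ (Fin D)) : Prop where
  isOpen : IsOpen U
  smooth : ContDiffOn ℝ (⊤ : ℕ∞) φ U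
  immersion : ∀ x ∈ U, Function.Injective (fderivWithin ℝ φ U x)
  injOn : Set.InjOn φ U
  openImage : ∃ V, IsOpen V ∧ φ '' U = S ∩ V
  mem : p ∈ φ '' U
  embedding : ∃ ψ, ContinuousOn ψ (φ '' U) ∧ ∀ x ∈ U, ψ (φ x) = x

/-- `S ⊆ ℝ^D` is an `n`-dimensional smooth embedded submanifold. -/
def IsSubmanifold {D : ℕ} (S : Set (EuclideanSpace ℝ (Fin D))) (n : ℕ) : Prop :=
  ∀ p ∈ S, ∃ φ U, IsLocalParam S n φ U p

/-- The nullity space at `p` of the second fundamental form `α` of `S`, viewed as a submanifold of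
the space form of kind `k`:  a tangent vector `v` is in the nullity iff `α(v, w) = 0` for all
`w ∈ T_pS`; concretely, iff for every smooth tangent vector field `W` along a smooth curve `c` in
`S` with `c(0) = p`, `c'(0) = v`, the derivative `W'(0)` has no component normal to `S` inside the
space form, i.e. `W'(0)` lies in the sum of `T_pS` and the normal space of the space form itself. -/
def nullityAt (k : SpaceFormKind) {D : ℕ} (S : Set (EuclideanSpace ℝ (Fin D)))
    (p : EuclideanSpace ℝ (Fin D)) : Set (EuclideanSpace ℝ (Fin D)) :=
  {v | v ∈ TangentAt S p ∧ ∀ c W : ℝ → EuclideanSpace ℝ (Fin D),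
    ContDiff ℝ (⊤ : ℕ∞) c → (∀ t, c t ∈ S) → c 0 = p → deriv c 0 = v →
    ContDiff ℝ (⊤ : ℕ∞) W → (∀ t, W t ∈ TangentAt S (c t)) →
    deriv W 0 ∈ TangentAt S p ⊔ radialAt k p}

/-- The index of nullity of `S` at `p`. -/
def nullityIndex (k : SpaceFormKind) {D : ℕ} (S : Set (EuclideanSpace ℝ (Fin D)))
    (p : EuclideanSpace ℝ (Fin D)) : ℕ :=
  Set.finrank ℝ (nullityAt k S p)

/-- `γ : ℝ → ℝ^D` is a geodesic of the Riemannian (resp. Lorentzian-induced) submanifold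
`S` of the space form of kind `k`: a smooth curve in `S` whose acceleration is orthogonal,
with respect to the ambient bilinear form, to all tangent spaces of `S`. -/
structure IsGeodesicOn (k : SpaceFormKind) {D : ℕ} (S : Set (EuclideanSpace ℝ (Fin D)))
    (γ : ℝ → EuclideanSpace ℝ (Fin D)) : Prop where
  smooth : ContDiff ℝ (⊤ : ℕ∞) γ
  mem : ∀ t, γ t ∈ S
  accel_normal : ∀ t, ∀ v ∈ TangentAt S (γ t), aForm k (deriv (deriv γ) t) v = 0

/-- `S` is a (geodesically, equivalently metrically) complete Riemannian manifold: every
initial condition gives rise to a geodesic defined on all of `ℝ`. -/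
def GeodComplete (k : SpaceFormKind) {D : ℕ} (S : Set (EuclideanSpace ℝ (Fin D))) : Prop :=
  ∀ p ∈ S, ∀ v ∈ TangentAt S p, ∃ γ, IsGeodesicOn k S γ ∧ γ 0 = p ∧ deriv γ 0 = v

/-- The set of points of `S` where the index of nullity is minimal. -/
def minNullitySet (k : SpaceFormKind) {D : ℕ} (S : Set (EuclideanSpace ℝ (Fin D))) :
    Set (EuclideanSpace ℝ (Fin D)) :=
  {q | q ∈ S ∧ ∀ r ∈ S, nullityIndex k S q ≤ nullityIndex k S r}

/-- The maximal integral manifold (leaf) through `p` of the nullity distribution of `S`,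
restricted to the subset `A`: all points reachable from `p` by smooth curves inside `A`
everywhere tangent to the nullity distribution. -/
def leafThrough (k : SpaceFormKind) {D : ℕ} (S A : Set (EuclideanSpace ℝ (Fin D)))
    (p : EuclideanSpace ℝ (Fin D)) : Set (EuclideanSpace ℝ (Fin D)) :=
  {q | ∃ c : ℝ → EuclideanSpace ℝ (Fin D), ContDiff ℝ (⊤ : ℕ∞) c ∧ (∀ t, c t ∈ A) ∧
    (∀ t, deriv c t ∈ nullityAt k S (c t)) ∧ c 0 = p ∧ c 1 = q}

/-- The dimension of the ambient linear space: `n + k` for a submanifold `M^n ⊆ ℝ^{n+k}`,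
`n + k + 1` for `M^n ⊆ S^{n+k} ⊆ ℝ^{n+k+1}` and for `M^n ⊆ H^{n+k} ⊆ ℝ^{n+k,1}`. -/
def ambientDim (k : SpaceFormKind) (n codim : ℕ) : ℕ :=
  match k with
  | .euclidean => n + codim
  | _ => n + codim + 1

/-- The set of points of `S` where the index of nullity is locally constant. -/
def lcNullitySet (k : SpaceFormKind) {D : ℕ} (S : Set (EuclideanSpace ℝ (Fin D))) :
    Set (EuclideanSpace ℝ (Fin D)) :=
  {q | q ∈ S ∧ ∃ V ∈ nhds q, ∀ r ∈ V ∩ S, nullityIndex k S r = nullityIndex k S q}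

/-- The orthogonal complement of a subspace `K` with respect to the ambient bilinear form. -/
def aPerp (k : SpaceFormKind) {D : ℕ} (K : Submodule ℝ (EuclideanSpace ℝ (Fin D))) :
    Submodule ℝ (EuclideanSpace ℝ (Fin D)) where
  carrier := {u | ∀ w ∈ K, aForm k u w = 0}
  zero_mem' := by intro w _; simp [aForm]
  add_mem' := by
    intro x y hx hy w hw
    have hxy : ∀ i, formSign k D i * (x + y) i * w i
        = formSign k D i * x i * w i + formSign k D i * y i * w i := by
      intro i; simp [PiLp.add_apply]; ring
    simp only [aForm] at *
    rw [Finset.sum_congr rfl (fun i _ => hxy i), Finset.sum_add_distrib, hx w hw, hy w hw,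
      add_zero]
  smul_mem' := by
    intro c x hx w hw
    have hcx : ∀ i, formSign k D i * (c • x) i * w i = c * (formSign k D i * x i * w i) := by
      intro i; simp [PiLp.smul_apply, smul_eq_mul]; ring
    simp only [aForm] at *
    rw [Finset.sum_congr rfl (fun i _ => hcx i), ← Finset.mul_sum, hx w hw, mul_zero]

/-! ### General analytic lemmas -/

/-- A smooth local inverse defined on an open neighbourhood. -/
lemma exists_local_inverse {F : Type*} [NormedAddCommGroup F] [NormedSpace ℝ F] [CompleteSpace F]
    (f : F → F) (U : Set F) (hU : IsOpen U) (hf : ContDiffOn ℝ (⊤ : ℕ∞) f U) (x : F) (hx : x ∈ U)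
    (hfx : fderiv ℝ f x = ContinuousLinearMap.id ℝ F) :
    ∃ O T : Set F, ∃ g : F → F, IsOpen O ∧ x ∈ O ∧ O ⊆ U ∧ IsOpen T ∧
      ContDiffOn ℝ (⊤ : ℕ∞) g T ∧ (∀ z ∈ T, g z ∈ U) ∧ ∀ y ∈ O, f y ∈ T ∧ g (f y) = y := by
  have hfat : ∀ y ∈ U, ContDiffAt ℝ (⊤ : ℕ∞) f y := fun y hy => hf.contDiffAt (hU.mem_nhds hy)
  have hn : ((⊤ : ℕ∞) : WithTop ℕ∞) ≠ 0 := by simp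
  have hd : HasFDerivAt f ((ContinuousLinearEquiv.refl ℝ F : F ≃L[ℝ] F) : F →L[ℝ] F) x := by
    have := ((hfat x hx).differentiableAt hn).hasFDerivAt
    rw [hfx] at this
    exact this
  let h := (hfat x hx).toOpenPartialHomeomorph f hd hn
  have hcoe : ∀ y, h y = f y := fun y => rfl
  have hcont : ContinuousOn (fderiv ℝ f) U :=
    hf.continuousOn_fderiv_of_isOpen hU (by simp)
  let U' : Set F := U ∩ fderiv ℝ f ⁻¹' {A | IsUnit A}
  have hU' : IsOpen U' := hcont.isOpen_inter_preimage hU Units.isOpen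
  refine ⟨h.source ∩ U', h.target ∩ h.symm ⁻¹' U', h.symm, h.open_source.inter hU', ?_, ?_,
    h.symm.isOpen_inter_preimage hU', ?_, ?_, ?_⟩
  · refine ⟨(hfat x hx).mem_toOpenPartialHomeomorph_source hd hn, hx, ?_⟩
    simp only [mem_preimage, mem_ofPred_eq, hfx]
    exact isUnit_one
  · intro y hy; exact hy.2.1
  · intro z hz
    obtain ⟨hz1, hz2, hz3⟩ := hz
    obtain ⟨e', he'⟩ := hz3
    let e := ContinuousLinearEquiv.ofUnit e'
    have he : (e : F →L[ℝ] F) = fderiv ℝ f (h.symm z) := by rw [← he']; rfl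
    apply ContDiffAt.contDiffWithinAt
    refine h.contDiffAt_symm (f₀' := e) hz1 ?_ (hfat _ hz2)
    rw [he]
    exact ((hfat _ hz2).differentiableAt hn).hasFDerivAt
  · intro z hz; exact hz.2.1
  · intro y hy
    have h1 : h.symm (f y) = y := h.left_inv hy.1
    refine ⟨⟨h.map_source hy.1, ?_⟩, h1⟩
    simp only [mem_preimage]
    rw [h1]; exact hy.2

/-- `r` is a smooth retraction of the open set `V` onto `S ∩ V`. -/
structure Retr {D : ℕ} (S V : Set (EuclideanSpace ℝ (Fin D)))
    (r : EuclideanSpace ℝ (Fin D) → EuclideanSpace ℝ (Fin D)) : Prop where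
  isOpen : IsOpen V
  smooth : ContDiffOn ℝ (⊤ : ℕ∞) r V
  maps : ∀ q ∈ V, r q ∈ S
  fix : ∀ q ∈ V, q ∈ S → r q = q

lemma exists_retr {D n : ℕ} {S : Set (EuclideanSpace ℝ (Fin D))} (hS : IsSubmanifold S n)
    {p : EuclideanSpace ℝ (Fin D)} (hp : p ∈ S) : ∃ V r, p ∈ V ∧ Retr S V r := by
  obtain ⟨φ, U, hφ⟩ := hS p hp
  obtain ⟨x, hx, rfl⟩ := hφ.mem
  have hn : ((⊤ : ℕ∞) : WithTop ℕ∞) ≠ 0 := by simp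
  have hinj : Function.Injective (fderiv ℝ φ x) := by
    have := hφ.immersion x hx
    rwa [fderivWithin_of_isOpen hφ.isOpen hx] at this
  obtain ⟨π', hπ'⟩ := LinearMap.exists_leftInverse_of_injective
    (fderiv ℝ φ x : EuclideanSpace ℝ (Fin n) →ₗ[ℝ] EuclideanSpace ℝ (Fin D))
    (LinearMap.ker_eq_bot.2 hinj)
  let π : EuclideanSpace ℝ (Fin D) →L[ℝ] EuclideanSpace ℝ (Fin n) := π'.toContinuousLinearMap
  have hdφ : DifferentiableAt ℝ φ x :=
    (hφ.smooth.contDiffAt (hφ.isOpen.mem_nhds hx)).differentiableAt hn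
  have hfd : fderiv ℝ (fun y => π (φ y)) x = ContinuousLinearMap.id ℝ _ := by
    have h1 := (π.hasFDerivAt (x := φ x)).comp x hdφ.hasFDerivAt
    have h2 := h1.fderiv
    ext1 u
    have h3 := LinearMap.congr_fun hπ' u
    have h4 : fderiv ℝ (fun y => π (φ y)) x = π.comp (fderiv ℝ φ x) := h2
    rw [h4]
    exact h3
  obtain ⟨O, T, g, hO, hxO, hOU, hT, hg, hgU, hfg⟩ := exists_local_inverse
    (fun y => π (φ y)) U hφ.isOpen (π.contDiff.comp_contDiffOn hφ.smooth) x hx hfd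
  obtain ⟨V0, hV0, hV0S⟩ := hφ.openImage
  obtain ⟨ψ, hψc, hψ⟩ := hφ.embedding
  obtain ⟨V1, hV1, hV1S⟩ := (continuousOn_iff'.1 hψc) O hO
  have himg : ∀ q ∈ U, φ q ∈ S := fun q hq => (hV0S.subset ⟨q, hq, rfl⟩).1
  refine ⟨V0 ∩ V1 ∩ π ⁻¹' T, fun q => φ (g (π q)), ⟨⟨(hV0S.subset ⟨x, hx, rfl⟩).2, ?_⟩, ?_⟩,
    ⟨(hV0.inter hV1).inter (hT.preimage π.continuous), ?_, ?_, ?_⟩⟩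
  · refine (hV1S.subset ⟨?_, ⟨x, hx, rfl⟩⟩).1
    simpa [hψ x hx] using hxO
  · exact (hfg x hxO).1
  · refine hφ.smooth.comp (hg.comp π.contDiff.contDiffOn ?_) ?_
    · intro q hq; exact hq.2
    · intro q hq; exact hgU _ hq.2
  · intro q hq; exact himg _ (hgU _ hq.2)
  · intro q hq hqS
    have hq' : q ∈ φ '' U := by rw [hV0S]; exact ⟨hqS, hq.1.1⟩
    have hψO : ψ q ∈ O := (hV1S.symm.subset ⟨hq.1.2, hq'⟩).1
    obtain ⟨y, hy, rfl⟩ := hq'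
    rw [hψ y hy] at hψO
    show φ (g (π (φ y))) = φ y
    rw [(hfg y hψO).2]

/-- Kernels of smooth families of linear maps with constant dimension on a set. -/
lemma const_rank {E F : Type*} [NormedAddCommGroup E] [NormedSpace ℝ E] [FiniteDimensional ℝ E]
    [NormedAddCommGroup F] [NormedSpace ℝ F] [FiniteDimensional ℝ F]
    (L : E → (E →L[ℝ] F)) (V : Set E) (hV : IsOpen V) (hL : ContDiffOn ℝ (⊤ : ℕ∞) L V)
    (p : E) (hp : p ∈ V) :
    ∃ V' ⊆ V, IsOpen V' ∧ p ∈ V' ∧ ∃ Gi P : E → (E →L[ℝ] E),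
      ContDiffOn ℝ (⊤ : ℕ∞) Gi V' ∧ ContDiffOn ℝ (⊤ : ℕ∞) P V' ∧
      ∀ q ∈ V', Module.finrank ℝ (L q).ker = Module.finrank ℝ (L p).ker →
        (L q).ker = (L p).ker.map ((Gi q : E →L[ℝ] E) : E →ₗ[ℝ] E) ∧
        (∀ u, L q (P q u) = 0) ∧ (∀ u, L q u = 0 → P q u = u) := by
  have : CompleteSpace E := FiniteDimensional.complete ℝ E
  obtain ⟨s, hs⟩ := LinearMap.exists_rightInverse_of_surjective
    ((L p : E →ₗ[ℝ] F).rangeRestrict) (LinearMap.range_rangeRestrict _)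
  obtain ⟨M', hM'⟩ := LinearMap.exists_extend s
  let M : F →L[ℝ] E := M'.toContinuousLinearMap
  have hM : ∀ u, L p (M (L p u)) = L p u := by
    intro u
    have h1 : M (L p u) = s ((L p : E →ₗ[ℝ] F).rangeRestrict u) :=
      LinearMap.congr_fun hM' ((L p : E →ₗ[ℝ] F).rangeRestrict u)
    have h2 := LinearMap.congr_fun hs ((L p : E →ₗ[ℝ] F).rangeRestrict u)
    rw [h1]
    exact congrArg Subtype.val h2
  let PK : E →L[ℝ] E := 1 - M.comp (L p)
  have hPK : ∀ u, L p (PK u) = 0 := by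
    intro u; simp [PK, hM]
  have hPK1 : ∀ u, L p u = 0 → PK u = u := by
    intro u hu; simp [PK, hu]
  let G : E → (E →L[ℝ] E) := fun q => M.comp (L q) + PK
  have hG : ContDiffOn ℝ (⊤ : ℕ∞) G V := (contDiffOn_const.clm_comp hL).add contDiffOn_const
  let V' := V ∩ G ⁻¹' {A | IsUnit A}
  have hV' : IsOpen V' := hG.continuousOn.isOpen_inter_preimage hV Units.isOpen
  have hGi : ContDiffOn ℝ (⊤ : ℕ∞) (fun q => Ring.inverse (G q)) V' := by
    intro q hq
    obtain ⟨u, hu⟩ := hq.2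
    have h1 := contDiffAt_ringInverse ℝ (n := ((⊤ : ℕ∞) : WithTop ℕ∞)) u
    rw [hu] at h1
    exact h1.comp_contDiffWithinAt q ((hG q hq.1).mono inter_subset_left)
  refine ⟨V', inter_subset_left, hV', ⟨hp, ?_⟩, fun q => Ring.inverse (G q),
    fun q => (Ring.inverse (G q)).comp (PK.comp (G q)), hGi, ?_, ?_⟩
  · have : G p = 1 := by simp [G, PK]
    simp [this]
  · exact hGi.clm_comp (contDiffOn_const.clm_comp (hG.mono inter_subset_left))
  · intro q hq hrk
    have hl : ∀ u, Ring.inverse (G q) (G q u) = u := by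
      intro u
      have := Ring.inverse_mul_cancel _ hq.2
      exact DFunLike.congr_fun this u
    have hr : ∀ u, G q (Ring.inverse (G q) u) = u := by
      intro u
      have := Ring.mul_inverse_cancel _ hq.2
      exact DFunLike.congr_fun this u
    have hGk : ∀ u, L q u = 0 → G q u = PK u := by
      intro u hu; simp [G, hu]
    have hinj : Function.Injective (G q : E →ₗ[ℝ] E) :=
      Function.LeftInverse.injective hl
    have hmap : (L q).ker.map (G q : E →ₗ[ℝ] E) = (L p).ker := by
      apply Submodule.eq_of_le_of_finrank_eq
      · rintro _ ⟨u, hu, rfl⟩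
        have hu' : L q u = 0 := hu
        show L p (G q u) = 0
        rw [hGk u hu', hPK]
      · rw [← hrk]
        exact (LinearEquiv.finrank_eq (Submodule.equivMapOfInjective _ hinj _)).symm
    have hmap2 : (L q).ker = (L p).ker.map ((Ring.inverse (G q) : E →L[ℝ] E) : E →ₗ[ℝ] E) := by
      rw [← hmap]
      ext u
      constructor
      · intro hu
        exact ⟨G q u, ⟨u, hu, rfl⟩, hl u⟩
      · rintro ⟨_, ⟨w, hw, rfl⟩, rfl⟩
        have : Ring.inverse (G q) (G q w) = w := hl w
        show L q (Ring.inverse (G q) (G q w)) = 0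
        rw [this]; exact hw
    refine ⟨hmap2, ?_, ?_⟩
    · intro u
      have : Ring.inverse (G q) (PK (G q u)) ∈ (L q).ker := by
        rw [hmap2]; exact ⟨_, hPK _, rfl⟩
      exact this
    · intro u hu
      have h1 : G q u ∈ (L p).ker := by rw [← hmap]; exact ⟨u, hu, rfl⟩
      show Ring.inverse (G q) (PK (G q u)) = u
      rw [hPK1 _ h1, hl]

/-- Multiplying by a bump function makes local smooth maps global. -/
lemma exists_cutoff {E : Type*} [NormedAddCommGroup E] [InnerProductSpace ℝ E]
    [FiniteDimensional ℝ E] (V : Set E) (hV : IsOpen V) (p : E) (hp : p ∈ V) :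
    ∃ χ : E → ℝ, (∀ᶠ y in nhds p, χ y = 1) ∧ (∀ y, y ∉ V → χ y = 0) ∧
      ∀ {G : Type} [NormedAddCommGroup G] [NormedSpace ℝ G] (f : E → G),
        ContDiffOn ℝ (⊤ : ℕ∞) f V → ContDiff ℝ (⊤ : ℕ∞) (fun y => χ y • f y) := by
  obtain ⟨δ, hδ, hball⟩ := Metric.isOpen_iff.1 hV p hp
  let χ : ContDiffBump p := ⟨δ / 4, δ / 2, by positivity, by linarith⟩
  have hsupp : tsupport χ ⊆ V := by
    rw [χ.tsupport_eq]
    refine (Metric.closedBall_subset_ball ?_).trans hball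
    show δ / 2 < δ
    linarith
  refine ⟨χ, χ.eventuallyEq_one, ?_, ?_⟩
  · intro y hy
    by_contra h
    exact hy (hsupp (subset_tsupport _ h))
  · intro G _ _ f hf
    rw [contDiff_iff_contDiffAt]
    intro y
    by_cases hy : y ∈ V
    · exact χ.contDiff.contDiffAt.smul (hf.contDiffAt (hV.mem_nhds hy))
    · have h0 : (χ : E → ℝ) =ᶠ[nhds y] 0 := notMem_tsupport_iff_eventuallyEq.1 (fun h => hy (hsupp h))
      have h1 : (fun y => χ y • f y) =ᶠ[nhds y] fun _ => 0 := by
        filter_upwards [h0] with z hz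
        simp [hz]
      exact contDiffAt_const.congr_of_eventuallyEq h1

namespace Retr

variable {D : ℕ} {S V : Set (EuclideanSpace ℝ (Fin D))}
  {r : EuclideanSpace ℝ (Fin D) → EuclideanSpace ℝ (Fin D)} {q : EuclideanSpace ℝ (Fin D)}

lemma mono (hR : Retr S V r) {V' : Set (EuclideanSpace ℝ (Fin D))} (h : V' ⊆ V)
    (ho : IsOpen V') : Retr S V' r :=
  ⟨ho, hR.smooth.mono h, fun q hq => hR.maps q (h hq), fun q hq => hR.fix q (h hq)⟩

lemma cd1 (hR : Retr S V r) : ContDiffOn ℝ (⊤ : ℕ∞) (fderiv ℝ r) V :=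
  hR.smooth.fderiv_of_isOpen hR.isOpen (by simp)

lemma cd2 (hR : Retr S V r) : ContDiffOn ℝ (⊤ : ℕ∞) (fderiv ℝ (fderiv ℝ r)) V :=
  hR.cd1.fderiv_of_isOpen hR.isOpen (by simp)

lemma hd0 (hR : Retr S V r) (hq : q ∈ V) : HasFDerivAt r (fderiv ℝ r q) q :=
  ((hR.smooth.contDiffAt (hR.isOpen.mem_nhds hq)).differentiableAt (by simp)).hasFDerivAt

lemma hd1 (hR : Retr S V r) (hq : q ∈ V) :
    HasFDerivAt (fderiv ℝ r) (fderiv ℝ (fderiv ℝ r) q) q :=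
  ((hR.cd1.contDiffAt (hR.isOpen.mem_nhds hq)).differentiableAt (by simp)).hasFDerivAt

lemma symm2 (hR : Retr S V r) (hq : q ∈ V) (v w : EuclideanSpace ℝ (Fin D)) :
    fderiv ℝ (fderiv ℝ r) q v w = fderiv ℝ (fderiv ℝ r) q w v := by
  have h := (hR.smooth.contDiffAt (hR.isOpen.mem_nhds hq)).isSymmSndFDerivAt
    (by simp only [minSmoothness_of_isRCLikeNormedField]; exact WithTop.coe_le_coe.2 (le_top : (2 : ℕ∞) ≤ ⊤))
  exact h v w

lemma curve (hR : Retr S V r) (hq : q ∈ V) (hqS : q ∈ S) (w : EuclideanSpace ℝ (Fin D)) :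
    ∃ c : ℝ → EuclideanSpace ℝ (Fin D), ContDiff ℝ (⊤ : ℕ∞) c ∧ (∀ t, c t ∈ S) ∧ c 0 = q ∧
      deriv c 0 = fderiv ℝ r q w := by
  obtain ⟨δ, hδ, hball⟩ := Metric.isOpen_iff.1 hR.isOpen q hq
  let ε : ℝ := δ / (2 * (‖w‖ + 1))
  have hε : 0 < ε := by positivity
  have hεw : ε * ‖w‖ < δ := by
    have h1 : ε * (2 * (‖w‖ + 1)) = δ := by
      simp only [ε]; field_simp
    nlinarith [norm_nonneg w]
  let c0 : ℝ → EuclideanSpace ℝ (Fin D) := fun t => q + (ε * Real.sin (t / ε)) • w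
  have hc0V : ∀ t, c0 t ∈ V := by
    intro t
    apply hball
    simp only [c0, Metric.mem_ball, dist_self_add_left, norm_smul, Real.norm_eq_abs, abs_mul,
      abs_of_pos hε]
    have := Real.abs_sin_le_one (t / ε)
    have h3 : ε * |Real.sin (t / ε)| * ‖w‖ ≤ ε * 1 * ‖w‖ := by gcongr
    linarith
  have hc0 : ContDiff ℝ (⊤ : ℕ∞) c0 := by
    simp only [c0]
    fun_prop
  have hd : HasDerivAt c0 w 0 := by
    have h1 : HasDerivAt (fun t : ℝ => t / ε) (1 / ε) 0 := (hasDerivAt_id 0).div_const ε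
    have h2 := ((h1.sin.const_mul ε).smul_const w).const_add q
    convert! h2 using 1
    simp [hε.ne']
  have hc00 : c0 0 = q := by simp [c0]
  refine ⟨fun t => r (c0 t), ?_, fun t => hR.maps _ (hc0V t), ?_, ?_⟩
  · exact hR.smooth.comp_contDiff hc0 hc0V
  · show r (c0 0) = q
    rw [hc00, hR.fix q hq hqS]
  · have h1 : HasFDerivAt r (fderiv ℝ r q) (c0 0) := by rw [hc00]; exact hR.hd0 hq
    exact (h1.comp_hasDerivAt 0 hd).deriv

lemma fix_vel (hR : Retr S V r) {c : ℝ → EuclideanSpace ℝ (Fin D)} {t : ℝ}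
    (hc : DifferentiableAt ℝ c t) (hcS : ∀ t, c t ∈ S) (hcV : c t ∈ V) :
    fderiv ℝ r (c t) (deriv c t) = deriv c t := by
  have h1 : (fun s => r (c s)) =ᶠ[nhds t] c := by
    filter_upwards [hc.continuousAt.eventually (hR.isOpen.mem_nhds hcV)] with s hs
    exact hR.fix _ hs (hcS s)
  have h2 := ((hR.hd0 hcV).comp_hasDerivAt t hc.hasDerivAt).deriv
  rw [← h2]
  exact h1.deriv_eq

lemma fderiv_mem (hR : Retr S V r) (hq : q ∈ V) (hqS : q ∈ S) (w : EuclideanSpace ℝ (Fin D)) :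
    fderiv ℝ r q w ∈ TangentAt S q := by
  obtain ⟨c, h1, h2, h3, h4⟩ := hR.curve hq hqS w
  exact Submodule.subset_span ⟨c, h1, h2, h3, h4⟩

lemma mem_tangent (hR : Retr S V r) (hq : q ∈ V) (hqS : q ∈ S) (v : EuclideanSpace ℝ (Fin D)) :
    v ∈ TangentAt S q ↔ fderiv ℝ r q v = v := by
  constructor
  · intro hv
    induction hv using Submodule.span_induction with
    | mem x hx =>
      obtain ⟨c, h1, h2, rfl, rfl⟩ := hx
      exact hR.fix_vel (h1.differentiable (by simp) 0) h2 hq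
    | zero => simp
    | add x y _ _ hx hy => rw [map_add, hx, hy]
    | smul a x _ hx => rw [map_smul, hx]
  · intro hv
    rw [← hv]; exact hR.fderiv_mem hq hqS v

lemma idem (hR : Retr S V r) (hq : q ∈ V) (hqS : q ∈ S) (v : EuclideanSpace ℝ (Fin D)) :
    fderiv ℝ r q (fderiv ℝ r q v) = fderiv ℝ r q v :=
  (hR.mem_tangent hq hqS _).1 (hR.fderiv_mem hq hqS v)

/-- A map vanishing on `S` near `q` has zero derivative along `S`. -/
lemma deriv_zero (hR : Retr S V r) (hq : q ∈ V) (hqS : q ∈ S) {G : Type*} [NormedAddCommGroup G]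
    [NormedSpace ℝ G] {F : EuclideanSpace ℝ (Fin D) → G}
    {F' : EuclideanSpace ℝ (Fin D) →L[ℝ] G} (hF : HasFDerivAt F F' q)
    (h0 : ∀ y ∈ V, y ∈ S → F y = 0) {v : EuclideanSpace ℝ (Fin D)} (hv : fderiv ℝ r q v = v) :
    F' v = 0 := by
  obtain ⟨c, hc, hcS, rfl, hcv⟩ := hR.curve hq hqS v
  rw [hv] at hcv
  have hcd : HasDerivAt c v 0 := by
    rw [← hcv]; exact (hc.differentiable (by simp) 0).hasDerivAt
  have h1 := hF.comp_hasDerivAt 0 hcd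
  have h2 : (fun s => F (c s)) =ᶠ[nhds 0] fun _ => (0 : G) := by
    filter_upwards [hcd.continuousAt.eventually (hR.isOpen.mem_nhds hq)] with s hs
    exact h0 _ hs (hcS s)
  have h3 : deriv (fun s => F (c s)) 0 = F' v := h1.deriv
  rw [← h3, h2.deriv_eq, deriv_const]

lemma nullity_iff (hR : Retr S V r) (hq : q ∈ V) (hqS : q ∈ S) (k : SpaceFormKind)
    (v : EuclideanSpace ℝ (Fin D)) :
    v ∈ nullityAt k S q ↔ fderiv ℝ r q v = v ∧ ∀ w, fderiv ℝ r q w = w →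
      fderiv ℝ (fderiv ℝ r) q v w ∈ TangentAt S q ⊔ radialAt k q := by
  constructor
  · rintro ⟨hv, hN⟩
    rw [hR.mem_tangent hq hqS] at hv
    refine ⟨hv, fun w hw => ?_⟩
    obtain ⟨c, hc, hcS, hc0, hcv⟩ := hR.curve hq hqS v
    rw [hv] at hcv
    obtain ⟨χ, hχ1, hχ0, hχ⟩ := exists_cutoff V hR.isOpen q hq
    have hs : ContDiff ℝ (⊤ : ℕ∞) (fun y => χ y • fderiv ℝ r y w) :=
      hχ _ (hR.cd1.clm_apply contDiffOn_const)
    have h := hN c (fun t => χ (c t) • fderiv ℝ r (c t) w) hc hcS hc0 hcv (hs.comp hc) ?_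
    · have hcd : HasDerivAt c v 0 := by
        rw [← hcv]; exact (hc.differentiable (by simp) 0).hasDerivAt
      have h1 : HasFDerivAt (fderiv ℝ r) (fderiv ℝ (fderiv ℝ r) q) (c 0) := by
        rw [hc0]; exact hR.hd1 hq
      have h2 := ((h1.comp_hasDerivAt 0 hcd).clm_apply (hasDerivAt_const 0 w)).deriv
      have h3 : (fun t => χ (c t) • fderiv ℝ r (c t) w) =ᶠ[nhds 0]
          fun t => (fderiv ℝ r ∘ c) t w := by
        rw [← hc0] at hχ1
        filter_upwards [hcd.continuousAt.eventually hχ1] with t ht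
        simp [ht]
      rw [h3.deriv_eq, h2] at h
      simpa using h
    · intro t
      by_cases ht : c t ∈ V
      · exact Submodule.smul_mem _ _ (hR.fderiv_mem ht (hcS t) w)
      · simp [hχ0 _ ht]
  · rintro ⟨hv, hN⟩
    refine ⟨(hR.mem_tangent hq hqS v).2 hv, ?_⟩
    intro c W hc hcS hc0 hcv hW hWT
    have hcd : HasDerivAt c v 0 := by
      rw [← hcv]; exact (hc.differentiable (by simp) 0).hasDerivAt
    have hWd : HasDerivAt W (deriv W 0) 0 := (hW.differentiable (by simp) 0).hasDerivAt
    have h1 : HasFDerivAt (fderiv ℝ r) (fderiv ℝ (fderiv ℝ r) q) (c 0) := by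
      rw [hc0]; exact hR.hd1 hq
    have h2 := ((h1.comp_hasDerivAt 0 hcd).clm_apply hWd).deriv
    have hcV : ∀ᶠ t in nhds 0, c t ∈ V :=
      hcd.continuousAt.eventually (hR.isOpen.mem_nhds (by rw [hc0]; exact hq))
    have h3 : W =ᶠ[nhds 0] fun t => (fderiv ℝ r ∘ c) t (W t) := by
      filter_upwards [hcV] with t ht
      exact ((hR.mem_tangent ht (hcS t) _).1 (hWT t)).symm
    rw [h3.deriv_eq, h2]
    have hW0 : fderiv ℝ r q (W 0) = W 0 := by
      have := hWT 0
      rw [hc0] at this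
      exact (hR.mem_tangent hq hqS _).1 this
    apply Submodule.add_mem
    · exact hN _ hW0
    · simp only [Function.comp, hc0]
      exact Submodule.mem_sup_left (hR.fderiv_mem hq hqS _)

end Retr

/-! ### The ambient form and the projection along `T ⊕ radial` -/

/-- The diagonal operator representing the ambient form. -/
def JJ (k : SpaceFormKind) (D : ℕ) : EuclideanSpace ℝ (Fin D) →L[ℝ] EuclideanSpace ℝ (Fin D) :=
  LinearMap.toContinuousLinearMap
    { toFun := fun x => WithLp.toLp 2 (fun i => formSign k D i * x i)
      map_add' := by intro x y; ext i; simp [mul_add]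
      map_smul' := by intro c x; ext i; simp; ring }

lemma JJ_apply (k : SpaceFormKind) (D : ℕ) (x : EuclideanSpace ℝ (Fin D)) (i : Fin D) :
    JJ k D x i = formSign k D i * x i := rfl

lemma aForm_eq (k : SpaceFormKind) {D : ℕ} (x y : EuclideanSpace ℝ (Fin D)) :
    aForm k x y = inner ℝ (JJ k D x) y := by
  rw [PiLp.inner_apply]
  simp only [aForm, JJ_apply]
  apply Finset.sum_congr rfl
  intro i _
  simp [mul_comm]

lemma aForm_comm (k : SpaceFormKind) {D : ℕ} (x y : EuclideanSpace ℝ (Fin D)) :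
    aForm k x y = aForm k y x := by
  simp only [aForm]
  apply Finset.sum_congr rfl
  intro i _
  ring

/-- The value of the form on the space form. -/
def sgn (k : SpaceFormKind) : ℝ :=
  match k with
  | .euclidean => 0
  | .sphere => 1
  | .hyperbolic => -1

/-- Projection onto the radial direction. -/
def rho (k : SpaceFormKind) {D : ℕ} (q : EuclideanSpace ℝ (Fin D)) :
    EuclideanSpace ℝ (Fin D) →L[ℝ] EuclideanSpace ℝ (Fin D) :=
  sgn k • (innerSL ℝ (JJ k D q)).smulRight q

lemma rho_apply (k : SpaceFormKind) {D : ℕ} (q u : EuclideanSpace ℝ (Fin D)) :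
    rho k q u = (sgn k * aForm k q u) • q := by
  simp [rho, aForm_eq, mul_smul]

lemma rho_contDiff (k : SpaceFormKind) {D : ℕ} :
    ContDiff ℝ (⊤ : ℕ∞) (rho k (D := D)) := by
  unfold rho
  apply ContDiff.const_smul
  apply ContDiff.smulRight
  · exact (innerSL ℝ).contDiff.comp (JJ k D).contDiff
  · exact contDiff_id

lemma rho_mem (k : SpaceFormKind) {D : ℕ} (q u : EuclideanSpace ℝ (Fin D)) :
    rho k q u ∈ radialAt k q := by
  rw [rho_apply]
  cases k
  · simp [sgn]
  · exact Submodule.smul_mem _ _ (Submodule.mem_span_singleton_self q)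
  · exact Submodule.smul_mem _ _ (Submodule.mem_span_singleton_self q)

lemma rho_radial (k : SpaceFormKind) {D : ℕ} {q u : EuclideanSpace ℝ (Fin D)}
    (hq : q ∈ spaceForm k D) (hu : u ∈ radialAt k q) : rho k q u = u := by
  rw [rho_apply]
  cases k
  · have : u = 0 := by simpa [radialAt] using hu
    simp [this, sgn]
  · obtain ⟨a, rfl⟩ := Submodule.mem_span_singleton.1 hu
    have h : aForm .sphere q q = 1 := hq
    rw [aForm_eq] at *
    simp [sgn, inner_smul_right, h]
  · obtain ⟨a, rfl⟩ := Submodule.mem_span_singleton.1 hu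
    have h : aForm .hyperbolic q q = -1 := hq.1
    rw [aForm_eq] at *
    simp [sgn, inner_smul_right, h]

lemma tangent_perp (k : SpaceFormKind) {D : ℕ} {S : Set (EuclideanSpace ℝ (Fin D))}
    (hSF : S ⊆ spaceForm k D) {q v : EuclideanSpace ℝ (Fin D)} (hk : k ≠ .euclidean)
    (hv : v ∈ TangentAt S q) : aForm k q v = 0 := by
  induction hv using Submodule.span_induction with
  | mem x hx =>
    obtain ⟨c, hc, hcS, rfl, rfl⟩ := hx
    have hcd : HasDerivAt c (deriv c 0) 0 := (hc.differentiable (by simp) 0).hasDerivAt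
    have h1 : HasDerivAt (fun t => inner ℝ (JJ k D (c t)) (c t)) _ 0 :=
      (((JJ k D).hasFDerivAt).comp_hasDerivAt 0 hcd).inner ℝ hcd
    have h2 : (fun t => inner ℝ (JJ k D (c t)) (c t)) = fun _ => sgn k := by
      funext t
      rw [← aForm_eq]
      have := hSF (hcS t)
      cases k
      · exact absurd rfl hk
      · exact this
      · exact this.1
    have h3 := h1.deriv
    rw [h2, deriv_const] at h3
    simp only [Function.comp, ← aForm_eq] at h3
    rw [aForm_comm k (deriv c 0)] at h3
    linarith
  | zero => simp [aForm_eq]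
  | add x y _ _ hx hy =>
    rw [aForm_eq] at *
    rw [inner_add_right, hx, hy, add_zero]
  | smul a x _ hx =>
    rw [aForm_eq] at *
    rw [inner_smul_right, hx, mul_zero]

lemma rho_tangent (k : SpaceFormKind) {D : ℕ} {S : Set (EuclideanSpace ℝ (Fin D))}
    (hSF : S ⊆ spaceForm k D) {q v : EuclideanSpace ℝ (Fin D)}
    (hv : v ∈ TangentAt S q) : rho k q v = 0 := by
  rw [rho_apply]
  by_cases hk : k = .euclidean
  · subst hk; simp [sgn]
  · simp [tangent_perp k hSF hk hv]

lemma radial_le_perp (k : SpaceFormKind) {D : ℕ} {S : Set (EuclideanSpace ℝ (Fin D))}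
    (hSF : S ⊆ spaceForm k D) (q : EuclideanSpace ℝ (Fin D)) :
    radialAt k q ≤ aPerp k (TangentAt S q) := by
  intro u hu w hw
  by_cases hk : k = .euclidean
  · subst hk
    have : u = 0 := by simpa [radialAt] using hu
    simp [this, aForm]
  · have h := tangent_perp k hSF hk hw
    have hu' : u ∈ Submodule.span ℝ {q} := by
      cases k
      · exact absurd rfl hk
      · exact hu
      · exact hu
    obtain ⟨a, rfl⟩ := Submodule.mem_span_singleton.1 hu'
    rw [aForm_eq] at *
    rw [map_smul, inner_smul_left, h, mul_zero]

/-- A projection with kernel `T ⊕ radial`. -/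
def QQ (k : SpaceFormKind) {D : ℕ} (r : EuclideanSpace ℝ (Fin D) → EuclideanSpace ℝ (Fin D))
    (q : EuclideanSpace ℝ (Fin D)) : EuclideanSpace ℝ (Fin D) →L[ℝ] EuclideanSpace ℝ (Fin D) :=
  (1 - fderiv ℝ r q).comp (1 - rho k q)

/-- The linear map whose kernel is the nullity. -/
def LL (k : SpaceFormKind) {D : ℕ} (r : EuclideanSpace ℝ (Fin D) → EuclideanSpace ℝ (Fin D))
    (q : EuclideanSpace ℝ (Fin D)) : EuclideanSpace ℝ (Fin D) →L[ℝ]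
      ((EuclideanSpace ℝ (Fin D) →L[ℝ] EuclideanSpace ℝ (Fin D)) × EuclideanSpace ℝ (Fin D)) :=
  (ContinuousLinearMap.inl ℝ _ _).comp
    (((ContinuousLinearMap.compL ℝ _ _ _ (QQ k r q)).comp
      ((ContinuousLinearMap.compL ℝ _ _ _).flip (fderiv ℝ r q))).comp (fderiv ℝ (fderiv ℝ r) q))
  + (ContinuousLinearMap.inr ℝ _ _).comp (1 - fderiv ℝ r q)

namespace Retr

variable {D : ℕ} {S V : Set (EuclideanSpace ℝ (Fin D))}
  {r : EuclideanSpace ℝ (Fin D) → EuclideanSpace ℝ (Fin D)} {q : EuclideanSpace ℝ (Fin D)}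
  {k : SpaceFormKind}

lemma QQ_cd (hR : Retr S V r) (k : SpaceFormKind) : ContDiffOn ℝ (⊤ : ℕ∞) (QQ k r) V :=
  (contDiffOn_const.sub hR.cd1).clm_comp (contDiffOn_const.sub (rho_contDiff k).contDiffOn)

lemma LL_cd (hR : Retr S V r) (k : SpaceFormKind) : ContDiffOn ℝ (⊤ : ℕ∞) (LL k r) V := by
  unfold LL
  refine ContDiffOn.add (contDiffOn_const.clm_comp (ContDiffOn.clm_comp (ContDiffOn.clm_comp ?_ ?_)
    hR.cd2)) (contDiffOn_const.clm_comp (contDiffOn_const.sub hR.cd1))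
  · exact (ContinuousLinearMap.contDiff _).comp_contDiffOn (hR.QQ_cd k)
  · exact (ContinuousLinearMap.contDiff _).comp_contDiffOn hR.cd1

lemma LL_apply (v : EuclideanSpace ℝ (Fin D)) :
    LL k r q v = ((QQ k r q).comp ((fderiv ℝ (fderiv ℝ r) q v).comp (fderiv ℝ r q)),
      v - fderiv ℝ r q v) := by
  simp [LL]

lemma QQ_ker (hR : Retr S V r) (hSF : S ⊆ spaceForm k D) (hq : q ∈ V) (hqS : q ∈ S)
    (u : EuclideanSpace ℝ (Fin D)) :
    QQ k r q u = 0 ↔ u ∈ TangentAt S q ⊔ radialAt k q := by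
  have hQ : QQ k r q u = (u - rho k q u) - fderiv ℝ r q (u - rho k q u) := by
    simp [QQ]
    abel
  rw [hQ, sub_eq_zero]
  constructor
  · intro h
    have h1 := (hR.mem_tangent hq hqS _).2 h.symm
    have h2 : u = (u - rho k q u) + rho k q u := by abel
    rw [h2]
    exact Submodule.add_mem_sup h1 (rho_mem k q u)
  · intro h
    obtain ⟨t, ht, s, hs, rfl⟩ := Submodule.mem_sup.1 h
    have h1 : t + s - rho k q (t + s) = t := by
      rw [map_add, rho_tangent k hSF ht, rho_radial k (hSF hqS) hs]; abel
    rw [h1]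
    exact ((hR.mem_tangent hq hqS _).1 ht).symm

lemma LL_ker (hR : Retr S V r) (hSF : S ⊆ spaceForm k D) (hq : q ∈ V) (hqS : q ∈ S)
    (v : EuclideanSpace ℝ (Fin D)) : LL k r q v = 0 ↔ v ∈ nullityAt k S q := by
  rw [hR.nullity_iff hq hqS, LL_apply, Prod.mk_eq_zero, sub_eq_zero, and_comm]
  apply and_congr
  · exact eq_comm
  · constructor
    · intro h w hw
      rw [← hR.QQ_ker hSF hq hqS]
      have := DFunLike.congr_fun h w
      simpa [hw] using this
    · intro h
      ext1 w
      have := h _ (hR.idem hq hqS w)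
      rw [← hR.QQ_ker hSF hq hqS] at this
      simpa using this

lemma nullity_coe (hR : Retr S V r) (hSF : S ⊆ spaceForm k D) (hq : q ∈ V) (hqS : q ∈ S) :
    nullityAt k S q = ((LL k r q).ker : Set (EuclideanSpace ℝ (Fin D))) := by
  ext v
  exact (hR.LL_ker hSF hq hqS v).symm

lemma nullity_span (hR : Retr S V r) (hSF : S ⊆ spaceForm k D) (hq : q ∈ V) (hqS : q ∈ S) :
    Submodule.span ℝ (nullityAt k S q) = (LL k r q).ker := by
  rw [hR.nullity_coe hSF hq hqS, Submodule.span_eq]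

lemma nullity_index (hR : Retr S V r) (hSF : S ⊆ spaceForm k D) (hq : q ∈ V) (hqS : q ∈ S) :
    nullityIndex k S q = Module.finrank ℝ (LL k r q).ker := by
  rw [nullityIndex, Set.finrank, hR.nullity_span hSF hq hqS]

lemma second_ff (hR : Retr S V r) (hSF : S ⊆ spaceForm k D) (hq : q ∈ V) (hqS : q ∈ S)
    {Q' : EuclideanSpace ℝ (Fin D) →L[ℝ] EuclideanSpace ℝ (Fin D) →L[ℝ] EuclideanSpace ℝ (Fin D)}
    (hQ' : HasFDerivAt (QQ k r) Q' q) {x t s : EuclideanSpace ℝ (Fin D)}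
    (hx : fderiv ℝ r q x = x) (ht : t ∈ TangentAt S q) (hs : s ∈ radialAt k q) :
    Q' x (t + s) = - QQ k r q (fderiv ℝ (fderiv ℝ r) q x t) := by
  have h1 := hR.deriv_zero hq hqS
    (hQ'.clm_apply ((hR.hd1 hq).clm_apply (hasFDerivAt_const t q))) (v := x) ?_ hx
  · have ht' := (hR.mem_tangent hq hqS t).1 ht
    have h2 : Q' x s = 0 := by
      have key : ∀ a : ℝ, k ≠ .euclidean → Q' x (a • q) = 0 := by
        intro a hk
        have h3 := hR.deriv_zero hq hqS
          (hQ'.clm_apply ((hasFDerivAt_id q).const_smul a)) (v := x) ?_ hx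
        · have h4 : QQ k r q x = 0 := (hR.QQ_ker hSF hq hqS x).2
            (Submodule.mem_sup_left ((hR.mem_tangent hq hqS x).2 hx))
          simpa [h4] using h3
        · intro y hy hyS
          apply (hR.QQ_ker hSF hy hyS _).2
          apply Submodule.mem_sup_right
          apply Submodule.smul_mem
          cases k
          · exact absurd rfl hk
          · exact Submodule.mem_span_singleton_self y
          · exact Submodule.mem_span_singleton_self y
      cases k
      · have : s = 0 := by simpa [radialAt] using hs
        simp [this]
      · obtain ⟨a, rfl⟩ := Submodule.mem_span_singleton.1 hs
        exact key a (by simp)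
      · obtain ⟨a, rfl⟩ := Submodule.mem_span_singleton.1 hs
        exact key a (by simp)
    rw [map_add, h2, add_zero]
    have h5 : QQ k r q (fderiv ℝ (fderiv ℝ r) q x t) + Q' x t = 0 := by
      simpa [ht'] using h1
    exact eq_neg_of_add_eq_zero_right h5
  · intro y hy hyS
    exact (hR.QQ_ker hSF hy hyS _).2 (Submodule.mem_sup_left (hR.fderiv_mem hy hyS _))

lemma nullity_field_deriv (hR : Retr S V r) (hq : q ∈ V) (hqS : q ∈ S)
    {Y : EuclideanSpace ℝ (Fin D) → EuclideanSpace ℝ (Fin D)} (hY : ContDiffOn ℝ (⊤ : ℕ∞) Y V)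
    (hYT : ∀ y ∈ V, y ∈ S → fderiv ℝ r y (Y y) = Y y)
    {t : EuclideanSpace ℝ (Fin D)} (ht : fderiv ℝ r q t = t) :
    fderiv ℝ Y q t = fderiv ℝ (fderiv ℝ r) q t (Y q) + fderiv ℝ r q (fderiv ℝ Y q t) := by
  have hYd : HasFDerivAt Y (fderiv ℝ Y q) q :=
    ((hY.contDiffAt (hR.isOpen.mem_nhds hq)).differentiableAt (by simp)).hasFDerivAt
  have h1 := hR.deriv_zero hq hqS (((hR.hd1 hq).clm_apply hYd).sub hYd) (v := t)
    (fun y hy hyS => sub_eq_zero.2 (hYT y hy hyS)) ht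
  simp only [sub_apply, add_apply,
    ContinuousLinearMap.comp_apply, ContinuousLinearMap.flip_apply] at h1
  rw [sub_eq_zero] at h1
  rw [← h1]
  rw [h1, add_comm, h1]

/-- The key computation (Codazzi): the nullity distribution is autoparallel. -/
lemma autoparallel (hR : Retr S V r) (hSF : S ⊆ spaceForm k D) (hq : q ∈ V) (hqS : q ∈ S)
    {X Y : EuclideanSpace ℝ (Fin D) → EuclideanSpace ℝ (Fin D)}
    (hX : ContDiffOn ℝ (⊤ : ℕ∞) X V) (hY : ContDiffOn ℝ (⊤ : ℕ∞) Y V)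
    (hXN : ∀ y ∈ V, y ∈ S → X y ∈ nullityAt k S y)
    (hYN : ∀ y ∈ V, y ∈ S → Y y ∈ nullityAt k S y) :
    fderiv ℝ Y q (X q) ∈ Submodule.span ℝ (nullityAt k S q) ⊔ aPerp k (TangentAt S q) := by
  have hXN' : ∀ y (hy : y ∈ V) (hyS : y ∈ S), _ :=
    fun y hy hyS => (hR.nullity_iff hy hyS k _).1 (hXN y hy hyS)
  have hYN' : ∀ y (hy : y ∈ V) (hyS : y ∈ S), _ :=
    fun y hy hyS => (hR.nullity_iff hy hyS k _).1 (hYN y hy hyS)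
  have hnh := hR.isOpen.mem_nhds hq
  have hXd : HasFDerivAt X (fderiv ℝ X q) q :=
    ((hX.contDiffAt hnh).differentiableAt (by simp)).hasFDerivAt
  have hY1 : ContDiffOn ℝ (⊤ : ℕ∞) (fderiv ℝ Y) V := hY.fderiv_of_isOpen hR.isOpen (by simp)
  have hYd2 : HasFDerivAt (fderiv ℝ Y) (fderiv ℝ (fderiv ℝ Y) q) q :=
    ((hY1.contDiffAt hnh).differentiableAt (by simp)).hasFDerivAt
  have hQd : HasFDerivAt (QQ k r) (fderiv ℝ (QQ k r) q) q :=
    (((hR.QQ_cd k).contDiffAt hnh).differentiableAt (by simp)).hasFDerivAt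
  have hYsymm : ∀ v w, fderiv ℝ (fderiv ℝ Y) q v w = fderiv ℝ (fderiv ℝ Y) q w v := by
    intro v w
    have h := (hY.contDiffAt hnh).isSymmSndFDerivAt
      (by simp only [minSmoothness_of_isRCLikeNormedField]; exact WithTop.coe_le_coe.2 (le_top : (2 : ℕ∞) ≤ ⊤))
    exact h v w
  -- derivatives of `Y` along tangent directions
  have hDY : ∀ y ∈ V, y ∈ S → ∀ t, fderiv ℝ r y t = t →
      fderiv ℝ Y y t ∈ TangentAt S y ⊔ radialAt k y := by
    intro y hy hyS t ht
    rw [hR.nullity_field_deriv hy hyS hY (fun z hz hzS => (hYN' z hz hzS).1) ht]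
    apply Submodule.add_mem
    · rw [hR.symm2 hy]
      exact (hYN' y hy hyS).2 t ht
    · exact Submodule.mem_sup_left (hR.fderiv_mem hy hyS _)
  have hxT := (hXN' q hq hqS).1
  obtain ⟨z, hz, s, hs, hzs⟩ := Submodule.mem_sup.1 (hDY q hq hqS _ hxT)
  rw [← hzs]
  refine Submodule.add_mem_sup (Submodule.subset_span ?_) (radial_le_perp k hSF q hs)
  rw [hR.nullity_iff hq hqS]
  refine ⟨(hR.mem_tangent hq hqS z).1 hz, fun w hw => ?_⟩
  rw [← hR.QQ_ker hSF hq hqS]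
  -- first identity
  have e1 := hR.deriv_zero hq hqS
    (hQd.clm_apply (hYd2.clm_apply ((hR.hd1 hq).clm_apply (hasFDerivAt_const w q)))) (v := X q)
    (fun y hy hyS => (hR.QQ_ker hSF hy hyS _).2 (hDY y hy hyS _ (hR.idem hy hyS w))) hxT
  -- second identity
  have e2 := hR.deriv_zero hq hqS
    (hQd.clm_apply (hYd2.clm_apply hXd)) (v := w)
    (fun y hy hyS => (hR.QQ_ker hSF hy hyS _).2 (hDY y hy hyS _ (hXN' y hy hyS).1)) hw
  simp only [add_apply, ContinuousLinearMap.comp_apply,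
    ContinuousLinearMap.flip_apply, map_add, zero_apply, map_zero, zero_add,
    hw] at e1 e2
  have e3 := hR.nullity_field_deriv hq hqS hX (fun z hz hzS => (hXN' z hz hzS).1) hw
  obtain ⟨t', ht', s', hs', hts'⟩ := Submodule.mem_sup.1 (hDY q hq hqS _ hw)
  have e4 := hR.second_ff hSF hq hqS hQd hxT ht' hs'
  have e5 := hR.second_ff hSF hq hqS hQd hw hz hs
  have e6 : QQ k r q (fderiv ℝ (fderiv ℝ r) q (X q) t') = 0 :=
    (hR.QQ_ker hSF hq hqS _).2 ((hXN' q hq hqS).2 t' ((hR.mem_tangent hq hqS t').1 ht'))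
  have e7 : QQ k r q (fderiv ℝ Y q (fderiv ℝ r q (fderiv ℝ X q w))) = 0 :=
    (hR.QQ_ker hSF hq hqS _).2 (hDY q hq hqS _ (hR.idem hq hqS _))
  rw [hts', e6, neg_zero] at e4
  rw [hzs] at e5
  rw [e4, add_zero] at e1
  rw [e5, e3, map_add, map_add, e7, add_zero, hYsymm w (X q), hR.symm2 hq w z,
    hR.symm2 hq w (X q)] at e2
  rw [e1, zero_add] at e2
  exact neg_eq_zero.1 e2

end Retr

/-! ### Nondegeneracy and the orthogonal projection -/

lemma anisotropic (k : SpaceFormKind) {D : ℕ} {q v : EuclideanSpace ℝ (Fin D)}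
    (hq : q ∈ spaceForm k D) (hperp : k ≠ .euclidean → aForm k q v = 0)
    (hv : aForm k v v = 0) : v = 0 := by
  have hsq : (∑ i, v i * v i = 0) → v = 0 := by
    intro h
    rw [Finset.sum_eq_zero_iff_of_nonneg (fun i _ => mul_self_nonneg _)] at h
    ext i
    have := h i (Finset.mem_univ i)
    simpa using this
  cases k
  · apply hsq
    simpa [aForm, formSign] using hv
  · apply hsq
    simpa [aForm, formSign] using hv
  · have h1 : aForm .hyperbolic q q = -1 := hq.1
    have h2 := hperp (by simp)
    cases D with
    | zero => ext i; exact i.elim0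
    | succ m =>
      simp only [aForm, formSign, Fin.sum_univ_castSucc, Fin.val_castSucc, Fin.val_last,
        if_true] at h1 h2 hv
      have hne : ∀ i : Fin m, ¬ ((i : ℕ) + 1 = m + 1) := fun i => by have := i.2; omega
      simp only [hne, if_false, one_mul] at h1 h2 hv
      have hCS := Finset.sum_mul_sq_le_sq_mul_sq Finset.univ
        (fun i : Fin m => q i.castSucc) (fun i : Fin m => v i.castSucc)
      simp only [pow_two] at hCS
      have hB : 0 ≤ ∑ i : Fin m, q i.castSucc * q i.castSucc :=
        Finset.sum_nonneg (fun i _ => mul_self_nonneg _)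
      have hA : 0 ≤ ∑ i : Fin m, v i.castSucc * v i.castSucc :=
        Finset.sum_nonneg (fun i _ => mul_self_nonneg _)
      apply hsq
      rw [Fin.sum_univ_castSucc]
      set A := ∑ i : Fin m, v i.castSucc * v i.castSucc
      set B := ∑ i : Fin m, q i.castSucc * q i.castSucc
      set C := ∑ i : Fin m, q i.castSucc * v i.castSucc
      set a := v (Fin.last m)
      set b := q (Fin.last m)
      have e1 : B = b * b - 1 := by linarith
      have e2 : C = b * a := by linarith
      have e3 : A = a * a := by linarith
      rw [e2, e1, e3] at hCS
      nlinarith [mul_self_nonneg a]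

/-- The adjoint as a continuous linear map. -/
def adjL (D : ℕ) : (EuclideanSpace ℝ (Fin D) →L[ℝ] EuclideanSpace ℝ (Fin D)) →L[ℝ]
    (EuclideanSpace ℝ (Fin D) →L[ℝ] EuclideanSpace ℝ (Fin D)) :=
  LinearMap.toContinuousLinearMap
    { toFun := fun A => ContinuousLinearMap.adjoint A
      map_add' := by intro A B; simp
      map_smul' := by intro c A; simp }

lemma adjL_inner {D : ℕ} (A : EuclideanSpace ℝ (Fin D) →L[ℝ] EuclideanSpace ℝ (Fin D))
    (x y : EuclideanSpace ℝ (Fin D)) : inner ℝ (adjL D A x) y = inner ℝ x (A y) :=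
  ContinuousLinearMap.adjoint_inner_left A y x

/-- Auxiliary invertible operator. -/
def GG (k : SpaceFormKind) {D : ℕ} (r : EuclideanSpace ℝ (Fin D) → EuclideanSpace ℝ (Fin D))
    (q : EuclideanSpace ℝ (Fin D)) : EuclideanSpace ℝ (Fin D) →L[ℝ] EuclideanSpace ℝ (Fin D) :=
  (adjL D (fderiv ℝ r q)).comp ((JJ k D).comp (fderiv ℝ r q)) +
    (adjL D (1 - fderiv ℝ r q)).comp (1 - fderiv ℝ r q)

/-- The orthogonal projection onto the tangent space. -/
def tau (k : SpaceFormKind) {D : ℕ} (r : EuclideanSpace ℝ (Fin D) → EuclideanSpace ℝ (Fin D))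
    (q : EuclideanSpace ℝ (Fin D)) : EuclideanSpace ℝ (Fin D) →L[ℝ] EuclideanSpace ℝ (Fin D) :=
  (Ring.inverse (GG k r q)).comp ((adjL D (fderiv ℝ r q)).comp (JJ k D))

namespace Retr

variable {D : ℕ} {S V : Set (EuclideanSpace ℝ (Fin D))}
  {r : EuclideanSpace ℝ (Fin D) → EuclideanSpace ℝ (Fin D)} {q : EuclideanSpace ℝ (Fin D)}
  {k : SpaceFormKind}

lemma GG_cd (hR : Retr S V r) (k : SpaceFormKind) : ContDiffOn ℝ (⊤ : ℕ∞) (GG k r) V := by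
  unfold GG
  exact (((adjL D).contDiff.comp_contDiffOn hR.cd1).clm_comp
    (contDiffOn_const.clm_comp hR.cd1)).add
    (((adjL D).contDiff.comp_contDiffOn (contDiffOn_const.sub hR.cd1)).clm_comp
      (contDiffOn_const.sub hR.cd1))

lemma GG_unit (hR : Retr S V r) (hSF : S ⊆ spaceForm k D) (hq : q ∈ V) (hqS : q ∈ S) :
    IsUnit (GG k r q) := by
  have hinj : Function.Injective (GG k r q) := by
    rw [injective_iff_map_eq_zero]
    intro u hu
    have h1 : fderiv ℝ r q u = 0 := by
      have hT := hR.fderiv_mem hq hqS u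
      apply anisotropic k (hSF hqS) (fun hk => tangent_perp k hSF hk hT)
      have h2 : inner ℝ (GG k r q u) (fderiv ℝ r q u) = 0 := by rw [hu]; simp
      simp only [GG, add_apply, ContinuousLinearMap.comp_apply, inner_add_left, adjL_inner,
        sub_apply, one_apply_eq_self, hR.idem hq hqS, sub_self, inner_zero_right,
        add_zero] at h2
      rw [aForm_eq]
      exact h2
    have h2 : inner ℝ (GG k r q u) u = 0 := by rw [hu]; simp
    simp only [GG, add_apply, ContinuousLinearMap.comp_apply, inner_add_left, adjL_inner,
      sub_apply, one_apply_eq_self, h1, inner_zero_right, sub_zero, zero_add,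
      inner_self_eq_zero] at h2
    exact h2
  rw [ContinuousLinearMap.isUnit_iff_bijective]
  exact ⟨hinj, (LinearMap.injective_iff_surjective
    (f := (GG k r q : EuclideanSpace ℝ (Fin D) →ₗ[ℝ] EuclideanSpace ℝ (Fin D)))).1 hinj⟩

lemma exists_tau (hR : Retr S V r) (hSF : S ⊆ spaceForm k D) (hq : q ∈ V) (hqS : q ∈ S) :
    ∃ V' ⊆ V, IsOpen V' ∧ q ∈ V' ∧ ContDiffOn ℝ (⊤ : ℕ∞) (tau k r) V' := by
  refine ⟨V ∩ GG k r ⁻¹' {A | IsUnit A}, inter_subset_left,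
    (hR.GG_cd k).continuousOn.isOpen_inter_preimage hR.isOpen Units.isOpen,
    ⟨hq, hR.GG_unit hSF hq hqS⟩, ?_⟩
  unfold tau
  refine ContDiffOn.clm_comp ?_ (((adjL D).contDiff.comp_contDiffOn
    (hR.cd1.mono inter_subset_left)).clm_comp contDiffOn_const)
  intro q hq
  obtain ⟨u, hu⟩ := hq.2
  have h1 := contDiffAt_ringInverse ℝ (n := ((⊤ : ℕ∞) : WithTop ℕ∞)) u
  rw [hu] at h1
  exact h1.comp_contDiffWithinAt q ((hR.GG_cd k q hq.1).mono inter_subset_left)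

lemma tau_tangent (hR : Retr S V r) (hSF : S ⊆ spaceForm k D) (hq : q ∈ V) (hqS : q ∈ S)
    {u : EuclideanSpace ℝ (Fin D)} (hu : fderiv ℝ r q u = u) : tau k r q u = u := by
  have h1 : adjL D (fderiv ℝ r q) (JJ k D u) = GG k r q u := by
    simp [GG, hu]
  have h2 := Ring.inverse_mul_cancel _ (hR.GG_unit hSF hq hqS)
  show Ring.inverse (GG k r q) (adjL D (fderiv ℝ r q) (JJ k D u)) = u
  rw [h1]
  exact DFunLike.congr_fun h2 u

lemma tau_perp (hR : Retr S V r) (hq : q ∈ V) (hqS : q ∈ S)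
    {u : EuclideanSpace ℝ (Fin D)} (hu : u ∈ aPerp k (TangentAt S q)) : tau k r q u = 0 := by
  have h1 : adjL D (fderiv ℝ r q) (JJ k D u) = 0 := by
    apply ext_inner_right ℝ
    intro y
    rw [adjL_inner, ← aForm_eq, inner_zero_left]
    exact hu _ (hR.fderiv_mem hq hqS y)
  show Ring.inverse (GG k r q) (adjL D (fderiv ℝ r q) (JJ k D u)) = 0
  rw [h1, map_zero]

end Retr

/-- Local data near a point of locally constant nullity. -/
lemma local_data {k : SpaceFormKind} {D n : ℕ} {S : Set (EuclideanSpace ℝ (Fin D))}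
    (hSF : S ⊆ spaceForm k D) (hsub : IsSubmanifold S n) {p : EuclideanSpace ℝ (Fin D)}
    (hp : p ∈ lcNullitySet k S) :
    ∃ V r, p ∈ V ∧ Retr S V r ∧ V ∩ S ⊆ lcNullitySet k S ∧
      ∃ Gi P : EuclideanSpace ℝ (Fin D) →
          (EuclideanSpace ℝ (Fin D) →L[ℝ] EuclideanSpace ℝ (Fin D)),
      ContDiffOn ℝ (⊤ : ℕ∞) Gi V ∧ ContDiffOn ℝ (⊤ : ℕ∞) P V ∧ ContDiffOn ℝ (⊤ : ℕ∞) (tau k r) V ∧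
      ∀ q ∈ V, q ∈ S → (LL k r q).ker = (LL k r p).ker.map
          ((Gi q : EuclideanSpace ℝ (Fin D) →L[ℝ] EuclideanSpace ℝ (Fin D)) :
            EuclideanSpace ℝ (Fin D) →ₗ[ℝ] EuclideanSpace ℝ (Fin D)) ∧
        (∀ u, P q u ∈ nullityAt k S q) ∧ (∀ u ∈ nullityAt k S q, P q u = u) := by
  obtain ⟨hpS, W, hW, hWc⟩ := hp
  obtain ⟨W', hW'W, hW', hpW'⟩ := mem_nhds_iff.1 hW
  obtain ⟨V0, r, hpV0, hR⟩ := exists_retr hsub hpS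
  obtain ⟨V1, hV10, hV1, hpV1, Gi, P, hGi, hP, hGP⟩ :=
    const_rank (LL k r) V0 hR.isOpen (hR.LL_cd k) p hpV0
  obtain ⟨V2, hV20, hV2, hpV2, htau⟩ := hR.exists_tau hSF hpV0 hpS
  have hV0 : V1 ∩ V2 ∩ W' ⊆ V0 := fun y hy => hV10 hy.1.1
  have hVo : IsOpen (V1 ∩ V2 ∩ W') := (hV1.inter hV2).inter hW'
  refine ⟨V1 ∩ V2 ∩ W', r, ⟨⟨hpV1, hpV2⟩, hpW'⟩, hR.mono hV0 hVo, ?_, Gi, P,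
    hGi.mono (fun y hy => hy.1.1), hP.mono (fun y hy => hy.1.1), htau.mono (fun y hy => hy.1.2), ?_⟩
  · rintro y ⟨hy, hyS⟩
    refine ⟨hyS, W', hW'.mem_nhds hy.2, ?_⟩
    rintro z ⟨hz, hzS⟩
    rw [hWc z ⟨hW'W hz, hzS⟩, hWc y ⟨hW'W hy.2, hyS⟩]
  · intro q hq hqS
    have hrk : Module.finrank ℝ (LL k r q).ker = Module.finrank ℝ (LL k r p).ker := by
      rw [← hR.nullity_index hSF (hV0 hq) hqS, ← hR.nullity_index hSF hpV0 hpS]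
      exact hWc q ⟨hW'W hq.2, hqS⟩
    obtain ⟨h1, h2, h3⟩ := hGP q hq.1.1 hrk
    refine ⟨h1, ?_, ?_⟩
    · intro u
      exact (hR.LL_ker hSF (hV0 hq) hqS _).1 (h2 u)
    · intro u hu
      exact h3 u ((hR.LL_ker hSF (hV0 hq) hqS _).2 hu)

/-- Geodesics starting in the nullity direction stay tangent to the nullity. -/
lemma geodesic_tangent {k : SpaceFormKind} {D n : ℕ} {S : Set (EuclideanSpace ℝ (Fin D))}
    (hSF : S ⊆ spaceForm k D) (hsub : IsSubmanifold S n) {γ : ℝ → EuclideanSpace ℝ (Fin D)}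
    (hγ : IsGeodesicOn k S γ) (h0 : γ 0 ∈ lcNullitySet k S)
    (hv : deriv γ 0 ∈ nullityAt k S (γ 0)) :
    ∃ ε > 0, ∀ t : ℝ, |t| < ε → γ t ∈ lcNullitySet k S ∧ deriv γ t ∈ nullityAt k S (γ t) := by
  obtain ⟨V, r, h0V, hR, hVS, Gi, P, -, hP, htau, hall⟩ := local_data hSF hsub h0
  let M : EuclideanSpace ℝ (Fin D) → (EuclideanSpace ℝ (Fin D) →L[ℝ] EuclideanSpace ℝ (Fin D)) :=
    fun q => (1 - P q).comp (tau k r q)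
  have hM : ContDiffOn ℝ (⊤ : ℕ∞) M V := (contDiffOn_const.sub hP).clm_comp htau
  have hMd : ∀ q ∈ V, HasFDerivAt M (fderiv ℝ M q) q := fun q hq =>
    ((hM.contDiffAt (hR.isOpen.mem_nhds hq)).differentiableAt (by simp)).hasFDerivAt
  have hM1 : ContDiffOn ℝ (⊤ : ℕ∞) (fderiv ℝ M) V := hM.fderiv_of_isOpen hR.isOpen (by simp)
  have hMT : ∀ q ∈ V, q ∈ S → ∀ u, fderiv ℝ r q u = u → M q u = u - P q u := by
    intro q hq hqS u hu
    simp [M, hR.tau_tangent hSF hq hqS hu]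
  have hMN : ∀ q ∈ V, q ∈ S → ∀ u ∈ nullityAt k S q, M q u = 0 := by
    intro q hq hqS u hu
    rw [hMT q hq hqS u ((hR.mem_tangent hq hqS u).1 hu.1), (hall q hq hqS).2.2 u hu, sub_self]
  have hMp : ∀ q ∈ V, q ∈ S → ∀ u ∈ aPerp k (TangentAt S q), M q u = 0 := by
    intro q hq hqS u hu
    simp [M, hR.tau_perp hq hqS hu]
  -- the quadratic term vanishes on the nullity
  have hβ : ∀ q ∈ V, q ∈ S → ∀ a ∈ nullityAt k S q, fderiv ℝ M q a a = 0 := by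
    intro q hq hqS a ha
    have haT := (hR.mem_tangent hq hqS a).1 ha.1
    have hPa : P q a = a := (hall q hq hqS).2.2 a ha
    have hY : ContDiffOn ℝ (⊤ : ℕ∞) (fun y => P y a) V := hP.clm_apply contDiffOn_const
    have hYd : HasFDerivAt (fun y => P y a) (fderiv ℝ (fun y => P y a) q) q :=
      ((hY.contDiffAt (hR.isOpen.mem_nhds hq)).differentiableAt (by simp)).hasFDerivAt
    have h1 := hR.deriv_zero hq hqS ((hMd q hq).clm_apply hYd) (v := a)
      (fun y hy hyS => hMN y hy hyS _ ((hall y hy hyS).2.1 a)) haT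
    have h2 := hR.autoparallel hSF hq hqS hY hY (fun y hy hyS => (hall y hy hyS).2.1 a)
      (fun y hy hyS => (hall y hy hyS).2.1 a)
    rw [hPa, hR.nullity_span hSF hq hqS] at h2
    obtain ⟨z, hz, s, hs, hzs⟩ := Submodule.mem_sup.1 h2
    have h3 : M q (fderiv ℝ (fun y => P y a) q a) = 0 := by
      rw [← hzs, map_add, hMp q hq hqS s hs, hMN q hq hqS z ((hR.LL_ker hSF hq hqS z).1 hz),
        add_zero]
    simpa [h3, hPa] using h1
  have hγd : ∀ t, HasDerivAt γ (deriv γ t) t := fun t =>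
    (hγ.smooth.differentiable (by simp) t).hasDerivAt
  have hγ1 : ContDiff ℝ (⊤ : ℕ∞) (deriv γ) :=
    (contDiff_infty_iff_deriv.1 hγ.smooth).2
  have hγd2 : ∀ t, HasDerivAt (deriv γ) (deriv (deriv γ) t) t := fun t =>
    (hγ1.differentiable (by simp) t).hasDerivAt
  have hγT : ∀ t, γ t ∈ V → fderiv ℝ r (γ t) (deriv γ t) = deriv γ t := fun t ht =>
    hR.fix_vel (hγd t).differentiableAt hγ.mem ht
  let b : ℝ → EuclideanSpace ℝ (Fin D) := fun t => M (γ t) (deriv γ t)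
  let A : ℝ → (EuclideanSpace ℝ (Fin D) →L[ℝ] EuclideanSpace ℝ (Fin D)) := fun t =>
    (fderiv ℝ M (γ t)).flip (deriv γ t) + fderiv ℝ M (γ t) (deriv γ t - b t)
  have hbd : ∀ t, γ t ∈ V → HasDerivAt b (A t (b t)) t := by
    intro t ht
    have h1 : HasDerivAt b _ t := ((hMd _ ht).comp_hasDerivAt t (hγd t)).clm_apply (hγd2 t)
    have hacc : deriv (deriv γ) t ∈ aPerp k (TangentAt S (γ t)) := hγ.accel_normal t
    have hb : b t = deriv γ t - P (γ t) (deriv γ t) := hMT _ ht (hγ.mem t) _ (hγT t ht)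
    have haN : deriv γ t - b t ∈ nullityAt k S (γ t) := by
      rw [hb, sub_sub_cancel]
      exact (hall _ ht (hγ.mem t)).2.1 _
    have h2 := hβ _ ht (hγ.mem t) _ haN
    convert! h1 using 1
    simp only [Function.comp, A]
    rw [hMp _ ht (hγ.mem t) _ hacc, add_zero]
    generalize fderiv ℝ M (γ t) = N at *
    generalize b t = bt at *
    generalize deriv γ t = x at *
    simp only [add_apply, ContinuousLinearMap.flip_apply]
    have h3 : N x x = N (x - bt) (x - bt) + N bt x + N (x - bt) bt := by
      simp only [map_sub, sub_apply]; abel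
    rw [h3, h2, zero_add]
  have hVev : ∀ᶠ t in nhds (0 : ℝ), γ t ∈ V :=
    (hγd 0).continuousAt.eventually (hR.isOpen.mem_nhds h0V)
  have hAc : ContinuousAt A 0 := by
    have c1 : ContinuousAt (fun t => fderiv ℝ M (γ t)) 0 :=
      ContinuousAt.comp (f := γ) (x := (0 : ℝ))
        (hM1.continuousOn.continuousAt (hR.isOpen.mem_nhds h0V)) (hγd 0).continuousAt
    have c2 : ContinuousAt (deriv γ) 0 := (hγd2 0).continuousAt
    have c3 : ContinuousAt b 0 := (hbd 0 h0V).continuousAt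
    refine ContinuousAt.add ?_ (c1.clm_apply (c2.sub c3))
    have c4 : ContinuousAt (fun t => (fderiv ℝ M (γ t)).flip) 0 :=
      ContinuousAt.comp (f := fun t => fderiv ℝ M (γ t)) (x := (0 : ℝ))
        ((ContinuousLinearMap.flipₗᵢ ℝ _ _ _).continuous.continuousAt) c1
    exact c4.clm_apply c2
  have hAev : ∀ᶠ t in nhds (0 : ℝ), ‖A t‖ < ‖A 0‖ + 1 :=
    hAc.norm.eventually (gt_mem_nhds (lt_add_one _))
  obtain ⟨ε, hε, hball⟩ := Metric.eventually_nhds_iff.1 (hVev.and hAev)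
  have hI : ∀ t ∈ Ioo (-ε) ε, γ t ∈ V ∧ ‖A t‖ < ‖A 0‖ + 1 := by
    intro t ht
    apply hball
    rw [Real.dist_eq, sub_zero, abs_lt]
    exact ht
  have hb0 : EqOn b (fun _ => 0) (Ioo (-ε) ε) := by
    refine ODE_solution_unique_of_mem_Ioo (v := fun t x => A t x) (s := fun _ => univ)
      (K := ⟨‖A 0‖ + 1, by positivity⟩) (t₀ := 0) ?_ ⟨by linarith, hε⟩ ?_ ?_ ?_
    · intro t ht
      apply LipschitzWith.lipschitzOnWith
      refine (A t).lipschitz.weaken ?_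
      exact (hI t ht).2.le
    · intro t ht
      exact ⟨hbd t (hI t ht).1, mem_univ _⟩
    · intro t ht
      refine ⟨?_, mem_univ _⟩
      simpa using hasDerivAt_const t (0 : EuclideanSpace ℝ (Fin D))
    · exact hMN _ h0V (hγ.mem 0) _ hv
  refine ⟨ε, hε, fun t ht => ?_⟩
  have htI : t ∈ Ioo (-ε) ε := abs_lt.1 ht
  have htV := (hI t htI).1
  refine ⟨hVS ⟨htV, hγ.mem t⟩, ?_⟩
  have h1 : b t = 0 := hb0 htI
  have h2 : b t = deriv γ t - P (γ t) (deriv γ t) := hMT _ htV (hγ.mem t) _ (hγT t htV)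
  rw [h1] at h2
  rw [sub_eq_zero.1 h2.symm]
  exact (hall _ htV (hγ.mem t)).2.1 _

lemma smoothTransition_deriv_zero {x : ℝ} (hx : x ≤ 0 ∨ 1 ≤ x) :
    deriv Real.smoothTransition x = 0 := by
  rcases hx with hx | hx
  · apply IsLocalMin.deriv_eq_zero
    apply Filter.Eventually.of_forall
    intro y
    rw [Real.smoothTransition.zero_of_nonpos hx]
    exact Real.smoothTransition.nonneg y
  · apply IsLocalMax.deriv_eq_zero
    apply Filter.Eventually.of_forall
    intro y
    rw [Real.smoothTransition.one_of_one_le hx]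
    exact Real.smoothTransition.le_one y

lemma nullity_smul {k : SpaceFormKind} {D n : ℕ} {S : Set (EuclideanSpace ℝ (Fin D))}
    (hSF : S ⊆ spaceForm k D) (hsub : IsSubmanifold S n) {q v : EuclideanSpace ℝ (Fin D)}
    (hq : q ∈ S) (a : ℝ) (hv : v ∈ nullityAt k S q) : a • v ∈ nullityAt k S q := by
  obtain ⟨V, r, hqV, hR⟩ := exists_retr hsub hq
  rw [← hR.LL_ker hSF hqV hq] at *
  exact (LL k r q).ker.smul_mem a hv

/-- Concatenation of a curve in the leaf with a short curve tangent to the nullity. -/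
lemma leaf_extend {k : SpaceFormKind} {D n : ℕ} {S : Set (EuclideanSpace ℝ (Fin D))}
    (hSF : S ⊆ spaceForm k D) (hsub : IsSubmanifold S n) {γ : ℝ → EuclideanSpace ℝ (Fin D)}
    (hγ : ContDiff ℝ (⊤ : ℕ∞) γ) {p : EuclideanSpace ℝ (Fin D)}
    (hleaf : γ 0 ∈ leafThrough k S (lcNullitySet k S) p) {ε : ℝ}
    (hall : ∀ t : ℝ, |t| < ε → γ t ∈ lcNullitySet k S ∧ deriv γ t ∈ nullityAt k S (γ t))
    {t : ℝ} (ht : |t| < ε) : γ t ∈ leafThrough k S (lcNullitySet k S) p := by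
  obtain ⟨c, hc, hcA, hcN, hc0, hc1⟩ := hleaf
  have hst : ContDiff ℝ (⊤ : ℕ∞) Real.smoothTransition := Real.smoothTransition.contDiff
  have hstd : ∀ x, HasDerivAt Real.smoothTransition (deriv Real.smoothTransition x) x := fun x =>
    (hst.differentiable (by simp) x).hasDerivAt
  let f : ℝ → ℝ := fun s => Real.smoothTransition (2 * s)
  let g : ℝ → ℝ := fun s => t * Real.smoothTransition (2 * s - 1)
  have hf : ContDiff ℝ (⊤ : ℕ∞) f := hst.comp (contDiff_const.mul contDiff_id)
  have hg : ContDiff ℝ (⊤ : ℕ∞) g :=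
    contDiff_const.mul (hst.comp ((contDiff_const.mul contDiff_id).sub contDiff_const))
  have hfd : ∀ s, HasDerivAt f (deriv Real.smoothTransition (2 * s) * 2) s := by
    intro s
    have h1 : HasDerivAt (fun s : ℝ => 2 * s) 2 s := by
      simpa using (hasDerivAt_id s).const_mul (2 : ℝ)
    exact (hstd (2 * s)).comp s h1
  have hgd : ∀ s, HasDerivAt g (t * (deriv Real.smoothTransition (2 * s - 1) * 2)) s := by
    intro s
    have h1 : HasDerivAt (fun s : ℝ => 2 * s - 1) 2 s := by
      simpa using ((hasDerivAt_id s).const_mul (2 : ℝ)).sub_const 1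
    exact ((hstd (2 * s - 1)).comp s h1).const_mul t
  have hgε : ∀ s, |g s| < ε := by
    intro s
    refine lt_of_le_of_lt ?_ ht
    simp only [g, abs_mul]
    have h1 := Real.smoothTransition.le_one (2 * s - 1)
    have h2 := Real.smoothTransition.nonneg (2 * s - 1)
    rw [abs_of_nonneg h2]
    nlinarith [abs_nonneg t]
  let C : ℝ → EuclideanSpace ℝ (Fin D) := fun s => c (f s) + (γ (g s) - γ 0)
  have hCd : ∀ s, HasDerivAt C ((deriv Real.smoothTransition (2 * s) * 2) • deriv c (f s) +
      (t * (deriv Real.smoothTransition (2 * s - 1) * 2)) • deriv γ (g s)) s := by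
    intro s
    have h1 := (hc.differentiable (by simp) (f s)).hasDerivAt.scomp s (hfd s)
    have h2 := (hγ.differentiable (by simp) (g s)).hasDerivAt.scomp s (hgd s)
    exact h1.add (h2.sub_const (γ 0))
  have hcase : ∀ s, (C s ∈ lcNullitySet k S) ∧ deriv C s ∈ nullityAt k S (C s) := by
    intro s
    rw [(hCd s).deriv]
    rcases le_total s (1 / 2) with hs | hs
    · have hle : 2 * s - 1 ≤ 0 := by linarith
      have hg0 : g s = 0 := by
        simp [g, Real.smoothTransition.zero_of_nonpos hle]
      have hCs : C s = c (f s) := by simp [C, hg0]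
      rw [hCs, smoothTransition_deriv_zero (Or.inl hle)]
      refine ⟨hcA _, ?_⟩
      simp only [zero_mul, mul_zero, zero_smul, add_zero]
      exact nullity_smul hSF hsub (hcA _).1 _ (hcN _)
    · have hle : 1 ≤ 2 * s := by linarith
      have hf1 : f s = 1 := Real.smoothTransition.one_of_one_le hle
      have hCs : C s = γ (g s) := by simp [C, hf1, hc1]
      rw [hCs, smoothTransition_deriv_zero (Or.inr hle)]
      obtain ⟨h1, h2⟩ := hall _ (hgε s)
      refine ⟨h1, ?_⟩
      simp only [zero_mul, zero_smul, zero_add]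
      exact nullity_smul hSF hsub h1.1 _ h2
  refine ⟨C, (hc.comp hf).add ((hγ.comp hg).sub contDiff_const), fun s => (hcase s).1,
    fun s => (hcase s).2, ?_, ?_⟩
  · have h1 : Real.smoothTransition (-1) = 0 :=
      Real.smoothTransition.zero_of_nonpos (by norm_num)
    simp [C, f, g, h1, hc0]
  · have h1 : Real.smoothTransition 2 = 1 := Real.smoothTransition.one_of_one_le (by norm_num)
    have h2 : (2 : ℝ) - 1 = 1 := by norm_num
    simp [C, f, g, h1, h2, hc1]

lemma nullity_smooth {k : SpaceFormKind} {D n : ℕ} {S : Set (EuclideanSpace ℝ (Fin D))}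
    (hSF : S ⊆ spaceForm k D) (hsub : IsSubmanifold S n) {p : EuclideanSpace ℝ (Fin D)}
    (hp : p ∈ lcNullitySet k S) : ∃ W ∈ nhds p,
      ∃ X : Fin (nullityIndex k S p) → (EuclideanSpace ℝ (Fin D) → EuclideanSpace ℝ (Fin D)),
        (∀ i, ContDiff ℝ (⊤ : ℕ∞) (X i)) ∧ ∀ q ∈ W ∩ S, (∀ i, X i q ∈ nullityAt k S q) ∧
          Submodule.span ℝ (nullityAt k S q) = Submodule.span ℝ (Set.range fun i => X i q) := by
  obtain ⟨V, r, hpV, hR, hVS, Gi, P, hGi, -, -, hall⟩ := local_data hSF hsub hp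
  obtain ⟨χ, hχ1, -, hχ⟩ := exists_cutoff V hR.isOpen p hpV
  let b := Module.finBasisOfFinrankEq ℝ (LL k r p).ker (hR.nullity_index hSF hpV hp.1).symm
  refine ⟨V ∩ {y | χ y = 1}, Filter.inter_mem (hR.isOpen.mem_nhds hpV) hχ1,
    fun i y => χ y • Gi y (b i), fun i => hχ _ (hGi.clm_apply contDiffOn_const), ?_⟩
  rintro q ⟨⟨hqV, hq1⟩, hqS⟩
  have hq1' : χ q = 1 := hq1
  simp only [hq1', one_smul]
  have hker := (hall q hqV hqS).1
  constructor
  · intro i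
    rw [← hR.LL_ker hSF hqV hqS]
    have : Gi q (b i) ∈ (LL k r q).ker := by
      rw [hker]; exact ⟨_, (b i).2, rfl⟩
    exact this
  · rw [hR.nullity_span hSF hqV hqS, hker]
    have h1 : Submodule.span ℝ (Set.range fun i => ((b i : (LL k r p).ker) :
        EuclideanSpace ℝ (Fin D))) = (LL k r p).ker := by
      have h2 := congrArg (Submodule.map (LL k r p).ker.subtype) b.span_eq
      rw [Submodule.map_span, Submodule.map_subtype_top, ← Set.range_comp] at h2
      exact h2
    conv_lhs => rw [← h1]
    rw [Submodule.map_span, ← Set.range_comp]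
    rfl

/-- **The nullity distribution is smooth and autoparallel where the index of nullity is locally
constant.**  Let `M = S` be an `n`-dimensional submanifold of a space form with nullity
distribution `𝒩`.  On the open subset of `M` where the index of nullity is locally constant:
(i) `𝒩` is a smooth distribution (locally spanned by smooth vector fields);
(ii) `𝒩` is autoparallel: if `X` and `Y` are vector fields tangent to `𝒩`, then the Levi-Civita
covariant derivative `∇_X Y` is again tangent to `𝒩` (for ambient extensions `X`, `Y`, by the
Gauss formula this says that the derivative of `Y` along `X p` lies in `𝒩_p ⊕ (T_pM)^⊥`);
(iii) consequently the maximal integral manifolds of `𝒩` there are totally geodesic submanifolds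
of `M`: any geodesic of `M` starting tangent to a leaf stays in the leaf for small times. -/
theorem nullity_smooth_autoparallel_totally_geodesic (k : SpaceFormKind) (n codim : ℕ)
    (S : Set (EuclideanSpace ℝ (Fin (ambientDim k n codim))))
    (hSF : S ⊆ spaceForm k (ambientDim k n codim))
    (hsub : IsSubmanifold S n) :
    (∀ p ∈ lcNullitySet k S, ∃ W ∈ nhds p,
      ∃ X : Fin (nullityIndex k S p) →
          (EuclideanSpace ℝ (Fin (ambientDim k n codim)) →
            EuclideanSpace ℝ (Fin (ambientDim k n codim))),
        (∀ i, ContDiff ℝ (⊤ : ℕ∞) (X i)) ∧ ∀ q ∈ W ∩ S, (∀ i, X i q ∈ nullityAt k S q) ∧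
          Submodule.span ℝ (nullityAt k S q) = Submodule.span ℝ (Set.range fun i => X i q)) ∧
    (∀ X Y : EuclideanSpace ℝ (Fin (ambientDim k n codim)) →
        EuclideanSpace ℝ (Fin (ambientDim k n codim)),
      ContDiff ℝ (⊤ : ℕ∞) X → ContDiff ℝ (⊤ : ℕ∞) Y →
      (∀ q ∈ lcNullitySet k S, X q ∈ nullityAt k S q ∧ Y q ∈ nullityAt k S q) →
      ∀ p ∈ lcNullitySet k S,
        fderiv ℝ Y p (X p) ∈ Submodule.span ℝ (nullityAt k S p) ⊔ aPerp k (TangentAt S p)) ∧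
    (∀ p ∈ lcNullitySet k S, ∀ q ∈ leafThrough k S (lcNullitySet k S) p,
      ∀ v ∈ nullityAt k S q, ∀ γ : ℝ → EuclideanSpace ℝ (Fin (ambientDim k n codim)),
        IsGeodesicOn k S γ → γ 0 = q → deriv γ 0 = v →
        ∃ ε > 0, ∀ t : ℝ, |t| < ε → γ t ∈ leafThrough k S (lcNullitySet k S) p) := by
  refine ⟨fun p hp => nullity_smooth hSF hsub hp, ?_, ?_⟩
  · intro X Y hX hY hXY p hp
    obtain ⟨V, r, hpV, hR, hVS, -⟩ := local_data hSF hsub hp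
    exact hR.autoparallel hSF hpV hp.1 hX.contDiffOn hY.contDiffOn
      (fun y hy hyS => (hXY y (hVS ⟨hy, hyS⟩)).1) (fun y hy hyS => (hXY y (hVS ⟨hy, hyS⟩)).2)
  · intro p hp q hq v hv γ hγ h0 hv0
    subst h0
    subst hv0
    have hlc : γ 0 ∈ lcNullitySet k S := by
      obtain ⟨c, -, hcA, -, -, hc1⟩ := hq
      rw [← hc1]; exact hcA 1
    obtain ⟨ε, hε, hall⟩ := geodesic_tangent hSF hsub hγ hlc hv
    exact ⟨ε, hε, fun t ht => leaf_extend hSF hsub hγ.smooth hq hall ht⟩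
end
end

section
/- Let M be a submanifold of a space form and let ν₁ be a parallel sub-bundle of rank m of the normal bundle of M (parallel with respect to the normal connection). Consider the generalized Gauss map G₁ : M → Gr_m, p ↦ ν₁(p), into the appropriate Grassmannian of m-dimensional linear subspaces of the ambient linear space. Then for every p ∈ M, the kernel of the differential d(G₁)_p equals the generalized nullity space 𝒩¹_p = {v ∈ T_pM : A_ξ v = 0 for all ξ ∈ ν₁(p)}, the common kernel of the shape operators of vectors in ν₁(p). -/
noncomputable section

open Set

/-- `v` is a normal vector of `S` at `p` inside the space form of kind `k`: it is tangent to the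
space form and orthogonal (for the ambient form) to the tangent space of `S`. -/
def IsNormalVec (k : SpaceFormKind) {D : ℕ} (S : Set (EuclideanSpace ℝ (Fin D)))
    (p v : EuclideanSpace ℝ (Fin D)) : Prop :=
  v ∈ TangentAt (spaceForm k D) p ∧ ∀ w ∈ TangentAt S p, aForm k v w = 0

/-- `ν₁` is a rank `m` smooth sub-bundle of the normal bundle of the submanifold `S` of the space
form of kind `k`, which is parallel with respect to the normal connection, i.e. invariant under
normal parallel transport (a normal field `ξ` along a curve is normal-parallel iff its derivative
has no component normal to `S` inside the space form, i.e. `ξ' ∈ T S ⊔ radial`). -/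
structure IsParallelNormalSubbundle (k : SpaceFormKind) {D : ℕ}
    (S : Set (EuclideanSpace ℝ (Fin D)))
    (ν₁ : EuclideanSpace ℝ (Fin D) → Submodule ℝ (EuclideanSpace ℝ (Fin D))) (m : ℕ) : Prop where
  normal : ∀ p ∈ S, ∀ v ∈ ν₁ p, IsNormalVec k S p v
  rank : ∀ p ∈ S, Module.finrank ℝ (ν₁ p) = m
  smooth : ∀ p ∈ S, ∃ V ∈ nhds p,
    ∃ ξ : Fin m → (EuclideanSpace ℝ (Fin D) → EuclideanSpace ℝ (Fin D)),
      (∀ i, ContDiff ℝ (⊤ : ℕ∞) (ξ i)) ∧ ∀ q ∈ V ∩ S, ν₁ q = Submodule.span ℝ (Set.range fun i => ξ i q)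
  parallel : ∀ c ξ : ℝ → EuclideanSpace ℝ (Fin D), ContDiff ℝ (⊤ : ℕ∞) c → (∀ t, c t ∈ S) →
    ContDiff ℝ (⊤ : ℕ∞) ξ → (∀ t, IsNormalVec k S (c t) (ξ t)) →
    (∀ t, deriv ξ t ∈ TangentAt S (c t) ⊔ radialAt k (c t)) →
    ξ 0 ∈ ν₁ (c 0) → ∀ t, ξ t ∈ ν₁ (c t)

/-- The generalized nullity space `𝒩¹_p` associated to the normal sub-bundle `ν₁`: the common
kernel of the shape operators `A_ξ`, `ξ ∈ ν₁(p)`.  Concretely, a tangent vector `v` lies in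
`𝒩¹_p` iff for every smooth tangent field `W` along a smooth curve `c` in `S` with `c(0) = p`,
`c'(0) = v`, one has `⟨α(v, W(0)), ξ⟩ = ⟨W'(0), ξ⟩ = 0` for all `ξ ∈ ν₁(p)`. -/
def gNullityAt (k : SpaceFormKind) {D : ℕ} (S : Set (EuclideanSpace ℝ (Fin D)))
    (ν₁ : EuclideanSpace ℝ (Fin D) → Submodule ℝ (EuclideanSpace ℝ (Fin D)))
    (p : EuclideanSpace ℝ (Fin D)) : Set (EuclideanSpace ℝ (Fin D)) :=
  {v | v ∈ TangentAt S p ∧ ∀ c W : ℝ → EuclideanSpace ℝ (Fin D),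
    ContDiff ℝ (⊤ : ℕ∞) c → (∀ t, c t ∈ S) → c 0 = p → deriv c 0 = v →
    ContDiff ℝ (⊤ : ℕ∞) W → (∀ t, W t ∈ TangentAt S (c t)) →
    ∀ ξ ∈ ν₁ p, aForm k (deriv W 0) ξ = 0}

/-- The set of points of `S` where the dimension of the generalized nullity space is minimal. -/
def gMinNullitySet (k : SpaceFormKind) {D : ℕ} (S : Set (EuclideanSpace ℝ (Fin D)))
    (ν₁ : EuclideanSpace ℝ (Fin D) → Submodule ℝ (EuclideanSpace ℝ (Fin D))) :
    Set (EuclideanSpace ℝ (Fin D)) :=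
  {q | q ∈ S ∧ ∀ r ∈ S, Set.finrank ℝ (gNullityAt k S ν₁ q) ≤ Set.finrank ℝ (gNullityAt k S ν₁ r)}

/-- The maximal integral manifold (leaf) through `p` of the generalized nullity distribution
`𝒩¹`, restricted to the subset `A`. -/
def gLeafThrough (k : SpaceFormKind) {D : ℕ} (S : Set (EuclideanSpace ℝ (Fin D)))
    (ν₁ : EuclideanSpace ℝ (Fin D) → Submodule ℝ (EuclideanSpace ℝ (Fin D)))
    (A : Set (EuclideanSpace ℝ (Fin D))) (p : EuclideanSpace ℝ (Fin D)) :
    Set (EuclideanSpace ℝ (Fin D)) :=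
  {q | ∃ c : ℝ → EuclideanSpace ℝ (Fin D), ContDiff ℝ (⊤ : ℕ∞) c ∧ (∀ t, c t ∈ A) ∧
    (∀ t, deriv c t ∈ gNullityAt k S ν₁ (c t)) ∧ c 0 = p ∧ c 1 = q}

theorem ggm_reparam (ε : ℝ) (hε : 0 < ε) : ∃ s : ℝ → ℝ, ContDiff ℝ (⊤ : ℕ∞) s ∧ s 0 = 0 ∧
    deriv s 0 = 1 ∧ ∀ t, |s t| < ε := by
  refine ⟨fun t => ε / 2 * Real.sin (t / (ε / 2)), by fun_prop, by simp, ?_, ?_⟩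
  · have h : HasDerivAt (fun t : ℝ => ε / 2 * Real.sin (t / (ε / 2)))
        (ε / 2 * (Real.cos (0 / (ε / 2)) * (1 / (ε / 2)))) 0 :=
      (((hasDerivAt_id (0 : ℝ)).div_const (ε / 2)).sin).const_mul (ε / 2)
    rw [h.deriv]
    simp
    field_simp
  · intro t
    rw [abs_mul, abs_of_pos (by positivity)]
    have := Real.abs_sin_le_one (t / (ε / 2))
    nlinarith

/-- local solution of a linear ODE, reparametrized to be globally defined -/
theorem ggm_ode {R : Type*} [NormedRing R] [NormedAlgebra ℝ R] [CompleteSpace R]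
    (A : ℝ → R) (hA : ContDiff ℝ (⊤ : ℕ∞) A) :
    ∃ (s : ℝ → ℝ) (Φ : ℝ → R), ContDiff ℝ (⊤ : ℕ∞) s ∧ s 0 = 0 ∧ deriv s 0 = 1 ∧
      ContDiff ℝ (⊤ : ℕ∞) Φ ∧ Φ 0 = 1 ∧ (∀ t, IsUnit (Φ t)) ∧
      ∀ t, HasDerivAt Φ (deriv s t • (A (s t) * Φ t)) t := by
  have hf : ContDiff ℝ 1 (fun z : ℝ × R => ((1 : ℝ), A z.1 * z.2)) := by
    have : ContDiff ℝ 1 A := hA.of_le (by exact_mod_cast le_top)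
    fun_prop
  obtain ⟨α, hα0, ε, hε, hα⟩ :=
    (hf.contDiffAt (x := ((0 : ℝ), (1 : R)))).exists_forall_mem_closedBall_exists_eq_forall_mem_Ioo_hasDerivAt₀ 0
  have hmem0 : (0 : ℝ) ∈ Ioo (0 - ε) (0 + ε) := by constructor <;> linarith
  have hcont : ContinuousAt (fun t => (α t).2) 0 := (hα 0 hmem0).continuousAt.snd
  have hu : ∀ᶠ t in nhds (0 : ℝ), IsUnit (α t).2 := by
    apply hcont.eventually
    have h1 : (fun t => (α t).2) 0 = 1 := by simp [hα0]
    rw [h1]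
    exact Units.isOpen.mem_nhds isUnit_one
  obtain ⟨δ, hδ, hδu⟩ := Metric.eventually_nhds_iff.1 hu
  obtain ⟨s, hs, hs0, hs1, hsb⟩ := ggm_reparam (min ε δ) (lt_min hε hδ)
  have hsd : ∀ t, HasDerivAt s (deriv s t) t := fun t =>
    ((hs.differentiable (by simp)) t).hasDerivAt
  have hmem : ∀ t, s t ∈ Ioo (0 - ε) (0 + ε) := fun t => by
    have := abs_lt.1 ((hsb t).trans_le (min_le_left _ _))
    constructor <;> linarith [this.1, this.2]
  have hcomp : ∀ t, HasDerivAt (fun t => α (s t))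
      (deriv s t • ((1 : ℝ), A (α (s t)).1 * (α (s t)).2)) t := fun t =>
    (hα (s t) (hmem t)).scomp t (hsd t)
  have h1 : ∀ t, HasDerivAt (fun t => (α (s t)).1) (deriv s t) t := fun t => by
    exact ((ContinuousLinearMap.fst ℝ ℝ R).hasFDerivAt.comp_hasDerivAt t (hcomp t)).congr_deriv (by simp)
  have h2 : ∀ t, HasDerivAt (fun t => (α (s t)).2)
      (deriv s t • (A (α (s t)).1 * (α (s t)).2)) t := fun t => by
    exact ((ContinuousLinearMap.snd ℝ ℝ R).hasFDerivAt.comp_hasDerivAt t (hcomp t)).congr_deriv (by simp)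
  have hd1 : deriv (fun t => (α (s t)).1) = deriv s := funext fun t => (h1 t).deriv
  have hds : ContDiff ℝ (⊤ : ℕ∞) (deriv s) := by
    exact (contDiff_infty_iff_deriv.1 hs).2
  have hS : ContDiff ℝ (⊤ : ℕ∞) (fun t => (α (s t)).1) := by
    refine contDiff_infty_iff_deriv.2 ⟨fun t => (h1 t).differentiableAt, ?_⟩
    rw [hd1]; exact hds
  refine ⟨fun t => (α (s t)).1, fun t => (α (s t)).2, hS, by simp [hs0, hα0], by rw [hd1, hs1],
    ?_, by simp [hs0, hα0], ?_, ?_⟩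
  · rw [contDiff_infty]
    intro n
    induction n with
    | zero => 
      exact contDiff_zero.2 (continuous_iff_continuousAt.2 fun t => (h2 t).continuousAt)
    | succ n ih =>
      push_cast
      refine contDiff_succ_iff_deriv.2 ⟨fun t => (h2 t).differentiableAt, by simp, ?_⟩
      rw [funext fun t => (h2 t).deriv]
      have e1 : ContDiff ℝ n (deriv s) := hds.of_le (by exact_mod_cast le_top)
      have e2 : ContDiff ℝ n (fun t => A (α (s t)).1) :=
        (hA.comp hS).of_le (by exact_mod_cast le_top)
      exact e1.smul (e2.mul ih)
  · intro t
    apply hδu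
    simpa using (hsb t).trans_le (min_le_right _ _)
  · intro t
    rw [hd1]
    exact h2 t

/-- Kato's transport -/
theorem ggm_kato {R : Type*} [NormedRing R] [NormedAlgebra ℝ R] [CompleteSpace R]
    (P : ℝ → R) (hP : ContDiff ℝ (⊤ : ℕ∞) P) (hPP : ∀ t, P t * P t = P t) :
    ∃ (s : ℝ → ℝ) (Φ : ℝ → R), ContDiff ℝ (⊤ : ℕ∞) s ∧ s 0 = 0 ∧ deriv s 0 = 1 ∧
      ContDiff ℝ (⊤ : ℕ∞) Φ ∧ Φ 0 = 1 ∧ (∀ t, IsUnit (Φ t)) ∧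
      (∀ t, P (s t) * Φ t = Φ t * P 0) ∧
      ∀ t, P (s t) * deriv Φ t * P 0 = 0 := by
  have hP' : ContDiff ℝ (⊤ : ℕ∞) (deriv P) := (contDiff_infty_iff_deriv.1 hP).2
  have hd : ∀ t, HasDerivAt P (deriv P t) t := fun t =>
    ((hP.differentiable (by simp)) t).hasDerivAt
  have hid : ∀ t, deriv P t * P t + P t * deriv P t = deriv P t := fun t => by
    have h := (hd t).mul (hd t)
    have e : P * P = P := funext hPP
    rw [e] at h
    exact h.unique (hd t)
  have hid2 : ∀ t, P t * deriv P t * P t = 0 := fun t => by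
    have h := congrArg (fun z => P t * z) (hid t)
    simp only [mul_add, ← mul_assoc, hPP] at h
    simpa using h
  obtain ⟨s, Φ, hs, hs0, hs1, hΦ, hΦ0, hu, hder⟩ :=
    ggm_ode (fun t => deriv P t * P t - P t * deriv P t) (by fun_prop)
  have hsd : ∀ t, HasDerivAt s (deriv s t) t := fun t =>
    ((hs.differentiable (by simp)) t).hasDerivAt
  have hinv : ∀ t, HasDerivAt (fun t => Ring.inverse (Φ t))
      (-(Ring.inverse (Φ t) * (deriv s t • ((deriv P (s t) * P (s t) - P (s t) * deriv P (s t)) * Φ t))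
        * Ring.inverse (Φ t))) t := fun t => by
    obtain ⟨u, hu⟩ := hu t
    have h := hasFDerivAt_ringInverse (𝕜 := ℝ) u
    rw [hu] at h
    refine (h.comp_hasDerivAt t (hder t)).congr_deriv ?_
    simp [← hu]
  have hconst : ∀ t, HasDerivAt (fun t => Ring.inverse (Φ t) * P (s t) * Φ t) 0 t := fun t => by
    have h := ((hinv t).mul ((hd (s t)).scomp t (hsd t))).mul (hder t)
    refine h.congr_deriv ?_
    clear h
    have e1 := Ring.mul_inverse_cancel _ (hu t)
    have h1 := hid (s t)
    have h2 := hid2 (s t)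
    have h3 := hPP (s t)
    simp only [Function.comp_apply, Pi.mul_apply]
    generalize Ring.inverse (Φ t) = Ψ at *
    generalize Φ t = Φ at *
    generalize deriv P (s t) = P' at *
    generalize P (s t) = P at *
    generalize deriv s t = r
    symm
    have : 0 = r • (Ψ * (-((P' * P - P * P') * (Φ * Ψ) * P) + P' + P * (P' * P - P * P')) * Φ) := by
      rw [e1]
      have : -((P' * P - P * P') * 1 * P) + P' + P * (P' * P - P * P') = 0 := by
        calc _ = - (P' * (P * P)) + P' + P * P' * P + P * P' * P - P * P * P' := by noncomm_ring
          _ = P' - (P' * P + P * P') := by rw [h3, h2]; noncomm_ring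
          _ = 0 := by rw [h1]; simp
      rw [this]; simp
    rw [this]
    simp only [mul_smul_comm, smul_mul_assoc, ← smul_neg, ← smul_add]
    congr 1
    noncomm_ring
  have hc : ∀ t, P (s t) * Φ t = Φ t * P 0 := fun t => by
    have h := is_const_of_deriv_eq_zero (fun t => (hconst t).differentiableAt)
      (fun t => (hconst t).deriv) t 0
    simp only [hΦ0, hs0, Ring.inverse_one, one_mul, mul_one] at h
    rw [← h, ← mul_assoc, ← mul_assoc, Ring.mul_inverse_cancel _ (hu t), one_mul]
  refine ⟨s, Φ, hs, hs0, hs1, hΦ, hΦ0, hu, hc, fun t => ?_⟩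
  rw [(hder t).deriv]
  have h2 := hid2 (s t)
  have h3 := hPP (s t)
  simp only [mul_smul_comm, smul_mul_assoc]
  have : P (s t) * ((deriv P (s t) * P (s t) - P (s t) * deriv P (s t)) * Φ t) * P 0 = 0 := by
    rw [mul_assoc, mul_assoc, ← hc]
    calc _ = P (s t) * deriv P (s t) * (P (s t) * P (s t)) * Φ t
          - P (s t) * P (s t) * deriv P (s t) * P (s t) * Φ t := by noncomm_ring
      _ = 0 := by rw [h3, h2, sub_self]
  rw [this, smul_zero]

theorem ggm_transport {V F : Type*} [NormedAddCommGroup V] [NormedSpace ℝ V] [CompleteSpace V]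
    [NormedAddCommGroup F] [NormedSpace ℝ F] [FiniteDimensional ℝ F]
    (B : V →L[ℝ] V →L[ℝ] ℝ) (E : ℝ → F →L[ℝ] V) (hE : ContDiff ℝ (⊤ : ℕ∞) E)
    (hnd : ∀ t a, (∀ b, B (E t a) (E t b) = 0) → a = 0) :
    ∃ (s : ℝ → ℝ) (Φ : ℝ → V →L[ℝ] V), ContDiff ℝ (⊤ : ℕ∞) s ∧ s 0 = 0 ∧ deriv s 0 = 1 ∧
      ContDiff ℝ (⊤ : ℕ∞) Φ ∧ Φ 0 = 1 ∧ (∀ t, IsUnit (Φ t)) ∧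
      ∀ η, (∀ b, B η (E 0 b) = 0) → ∀ t, (∀ b, B (Φ t η) (E (s t) b) = 0) ∧
        ∃ a, deriv Φ t η = E (s t) a := by
  have : CompleteSpace F := FiniteDimensional.complete ℝ F
  let R : ℝ → V →L[ℝ] (F →L[ℝ] ℝ) := fun t => ((ContinuousLinearMap.compL ℝ F V ℝ).flip (E t)).comp B
  have hR : ContDiff ℝ (⊤ : ℕ∞) R := by
    refine ContDiff.clm_comp ?_ contDiff_const
    exact (ContinuousLinearMap.contDiff _).comp hE
  have hRa : ∀ t x b, R t x b = B x (E t b) := fun t x b => rfl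
  let G : ℝ → F →L[ℝ] (F →L[ℝ] ℝ) := fun t => (R t).comp (E t)
  have hG : ContDiff ℝ (⊤ : ℕ∞) G := hR.clm_comp hE
  have hGeq : ∀ t, ∃ e : F ≃L[ℝ] (F →L[ℝ] ℝ), (e : F →L[ℝ] (F →L[ℝ] ℝ)) = G t := fun t => by
    have hinj : Function.Injective (G t : F →ₗ[ℝ] (F →L[ℝ] ℝ)) := by
      rw [← LinearMap.ker_eq_bot, LinearMap.ker_eq_bot']
      intro a ha
      refine hnd t a fun b => ?_
      exact congrArg (fun f : F →L[ℝ] ℝ => f b) ha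
    have hdim : Module.finrank ℝ F = Module.finrank ℝ (F →L[ℝ] ℝ) := by
      rw [← (LinearMap.toContinuousLinearMap : (F →ₗ[ℝ] ℝ) ≃ₗ[ℝ] _).finrank_eq]
      exact Subspace.dual_finrank_eq.symm
    refine ⟨(LinearEquiv.ofInjectiveOfFinrankEq _ hinj hdim).toContinuousLinearEquiv, ?_⟩
    ext a b
    rfl
  let H : ℝ → (F →L[ℝ] ℝ) →L[ℝ] F := fun t => ContinuousLinearMap.inverse (G t)
  have hH : ContDiff ℝ (⊤ : ℕ∞) H := by
    rw [contDiff_iff_contDiffAt]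
    intro t
    obtain ⟨e, he⟩ := hGeq t
    have h := contDiffAt_map_inverse (𝕜 := ℝ) (n := (⊤ : ℕ∞)) e
    rw [he] at h
    exact h.comp t hG.contDiffAt
  have hGH : ∀ t f, G t (H t f) = f := fun t f => by
    obtain ⟨e, he⟩ := hGeq t
    simp only [H, ← he, ContinuousLinearMap.inverse_equiv]
    simp
  have hHG : ∀ t a, H t (G t a) = a := fun t f => by
    obtain ⟨e, he⟩ := hGeq t
    simp only [H, ← he, ContinuousLinearMap.inverse_equiv]
    simp
  let P : ℝ → V →L[ℝ] V := fun t => 1 - (E t).comp ((H t).comp (R t))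
  have hPa : ∀ t x, P t x = x - E t (H t (R t x)) := fun t x => rfl
  have hP : ContDiff ℝ (⊤ : ℕ∞) P := contDiff_const.sub (hE.clm_comp (hH.clm_comp hR))
  have hRP : ∀ t x, R t (P t x) = 0 := fun t x => by
    rw [hPa, map_sub]
    have : R t (E t (H t (R t x))) = R t x := hGH t _
    rw [this, sub_self]
  have hPP : ∀ t, P t * P t = P t := fun t => by
    ext x
    change P t (P t x) = P t x
    rw [hPa t (P t x), hRP]
    simp
  obtain ⟨s, Φ, hs, hs0, hs1, hΦ, hΦ0, hu, hc, hd⟩ := ggm_kato P hP hPP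
  refine ⟨s, Φ, hs, hs0, hs1, hΦ, hΦ0, hu, fun η hη t => ?_⟩
  have hR0 : R 0 η = 0 := by
    ext b
    exact hη b
  have hP0 : P 0 η = η := by rw [hPa, hR0]; simp
  have h1 : P (s t) (Φ t η) = Φ t η := by
    have := congrArg (fun f : V →L[ℝ] V => f η) (hc t)
    simpa [hP0] using this
  have h2 : P (s t) (deriv Φ t η) = 0 := by
    have := congrArg (fun f : V →L[ℝ] V => f η) (hd t)
    simpa [hP0] using this
  constructor
  · intro b
    rw [← hRa, ← h1, hRP]
    rfl
  · rw [hPa, sub_eq_zero] at h2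
    exact ⟨_, h2⟩

/-- The ambient form as a continuous bilinear map. -/
def ggmB (k : SpaceFormKind) (D : ℕ) :
    EuclideanSpace ℝ (Fin D) →L[ℝ] EuclideanSpace ℝ (Fin D) →L[ℝ] ℝ :=
  ∑ i, (EuclideanSpace.proj i : EuclideanSpace ℝ (Fin D) →L[ℝ] ℝ).smulRight
    (formSign k D i • (EuclideanSpace.proj i : EuclideanSpace ℝ (Fin D) →L[ℝ] ℝ))

theorem ggmB_apply (k : SpaceFormKind) {D : ℕ} (x y : EuclideanSpace ℝ (Fin D)) :
    ggmB k D x y = aForm k x y := by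
  simp only [ggmB, aForm, _root_.sum_apply, ContinuousLinearMap.smulRight_apply,
    _root_.smul_apply, smul_eq_mul]
  refine Finset.sum_congr rfl fun i _ => ?_
  change x i * (formSign k D i * y i) = _
  ring

theorem ggmB_symm (k : SpaceFormKind) {D : ℕ} (x y : EuclideanSpace ℝ (Fin D)) :
    ggmB k D x y = ggmB k D y x := by
  simp only [ggmB_apply, aForm]
  exact Finset.sum_congr rfl fun i _ => by ring

/-- product rule for the form -/
theorem ggmB_hasDerivAt (k : SpaceFormKind) {D : ℕ} {f g : ℝ → EuclideanSpace ℝ (Fin D)}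
    {f' g' : EuclideanSpace ℝ (Fin D)} {t : ℝ} (hf : HasDerivAt f f' t) (hg : HasDerivAt g g' t) :
    HasDerivAt (fun t => ggmB k D (f t) (g t)) (ggmB k D (f t) g' + ggmB k D f' (g t)) t := by
  have h := (ggmB k D).hasFDerivAt.comp_hasDerivAt t hf
  have := h.clm_apply hg
  rw [add_comm]
  exact this

/-- If `B(f,g)` is constant, the derivative relation. -/
theorem ggmB_deriv_const (k : SpaceFormKind) {D : ℕ} {f g : ℝ → EuclideanSpace ℝ (Fin D)}
    {f' g' : EuclideanSpace ℝ (Fin D)} {t : ℝ} (hf : HasDerivAt f f' t) (hg : HasDerivAt g g' t)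
    (r : ℝ) (h : ∀ t, ggmB k D (f t) (g t) = r) :
    ggmB k D (f t) g' + ggmB k D f' (g t) = 0 := by
  have h1 := ggmB_hasDerivAt k hf hg
  have h2 : (fun t => ggmB k D (f t) (g t)) = fun _ => r := funext h
  rw [h2] at h1
  exact h1.unique (hasDerivAt_const t r)

theorem ggm_smooth_hasDerivAt {V : Type*} [NormedAddCommGroup V] [NormedSpace ℝ V] {f : ℝ → V}
    (hf : ContDiff ℝ (⊤ : ℕ∞) f) (t : ℝ) : HasDerivAt f (deriv f t) t :=
  ((hf.differentiable (by simp)) t).hasDerivAt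

theorem ggm_tangent_mono {D : ℕ} {S T : Set (EuclideanSpace ℝ (Fin D))} (h : S ⊆ T)
    (p : EuclideanSpace ℝ (Fin D)) : TangentAt S p ≤ TangentAt T p := by
  refine Submodule.span_mono ?_
  rintro v ⟨c, hc, hcS, h0, h1⟩
  exact ⟨c, hc, fun t => h (hcS t), h0, h1⟩

/-- the square of the position vector -/
theorem ggm_sq (k : SpaceFormKind) (hk : k ≠ .euclidean) :
    ∃ r : ℝ, r ≠ 0 ∧ ∀ (D : ℕ) (q : EuclideanSpace ℝ (Fin D)), q ∈ spaceForm k D → ggmB k D q q = r := by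
  cases k with
  | euclidean => exact absurd rfl hk
  | sphere => exact ⟨1, by simp, fun D q hq => by rw [ggmB_apply]; exact hq⟩
  | hyperbolic => exact ⟨-1, by simp, fun D q hq => by rw [ggmB_apply]; exact hq.1⟩

theorem ggm_tangent_radial (k : SpaceFormKind) (hk : k ≠ .euclidean) {D : ℕ}
    {q v : EuclideanSpace ℝ (Fin D)} 
    (hv : v ∈ TangentAt (spaceForm k D) q) : ggmB k D v q = 0 := by
  obtain ⟨r, hr, hsq⟩ := ggm_sq k hk
  refine Submodule.span_induction (p := fun v _ => ggmB k D v q = 0) ?_ ?_ ?_ ?_ hv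
  · rintro w ⟨c, hc, hcS, h0, h1⟩
    have hd := ggm_smooth_hasDerivAt hc 0
    have := ggmB_deriv_const k hd hd r (fun t => hsq D _ (hcS t))
    rw [ggmB_symm k (c 0), h0, h1] at this
    linarith
  · simp
  · intro x y _ _ hx hy
    simp [hx, hy]
  · intro a x _ hx
    simp [hx]

theorem ggm_nondeg (k : SpaceFormKind) {D : ℕ} {q u : EuclideanSpace ℝ (Fin D)}
    (hq : q ∈ spaceForm k D) (huu : ggmB k D u u = 0)
    (huq : k ≠ .euclidean → ggmB k D u q = 0) : u = 0 := by
  have hpos : (∀ i, formSign k D i = 1) → u = 0 := by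
    intro hs
    rw [ggmB_apply, aForm] at huu
    simp only [hs, one_mul] at huu
    rw [Finset.sum_eq_zero_iff_of_nonneg (fun i _ => mul_self_nonneg _)] at huu
    ext i
    simpa using huu i (Finset.mem_univ i)
  cases k with
  | euclidean => exact hpos fun i => rfl
  | sphere => exact hpos fun i => rfl
  | hyperbolic =>
    have huq := huq (by simp)
    have hqq := hq.1
    rw [ggmB_apply] at huu huq
    cases D with
    | zero => exact Subsingleton.elim _ _
    | succ d =>
      have hform : ∀ x y : EuclideanSpace ℝ (Fin (d+1)), aForm .hyperbolic x y =
          ∑ i : Fin d, x i.castSucc * y i.castSucc - x (Fin.last d) * y (Fin.last d) := by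
        intro x y
        rw [aForm, Fin.sum_univ_castSucc]
        have h1 : ∀ i : Fin d, formSign .hyperbolic (d+1) i.castSucc = 1 := fun i => by
          have := i.2
          simp only [formSign, Fin.val_castSucc]
          rw [if_neg (by omega)]
        have h2 : formSign .hyperbolic (d+1) (Fin.last d) = -1 := by
          simp [formSign]
        simp only [h1, h2]
        simp
        ring
      rw [hform] at huu huq hqq
      have cs := Finset.sum_mul_sq_le_sq_mul_sq Finset.univ (fun i : Fin d => u i.castSucc)
        (fun i => q i.castSucc)
      simp only [pow_two] at cs
      have e1 := sub_eq_zero.1 huu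
      have e2 := sub_eq_zero.1 huq
      have e3 : ∑ i : Fin d, q i.castSucc * q i.castSucc = q (Fin.last d) * q (Fin.last d) - 1 := by
        linarith
      rw [e1, e2, e3] at cs
      have hl : u (Fin.last d) = 0 := by nlinarith
      rw [hl, mul_zero, Finset.sum_eq_zero_iff_of_nonneg (fun i _ => mul_self_nonneg _)] at e1
      ext i
      refine Fin.lastCases ?_ ?_ i
      · simpa using hl
      · intro j
        simpa using e1 j (Finset.mem_univ j)

/-- A curve that is smooth near `0` and stays in `S` near `0` has tangent velocity. -/
theorem ggm_tangent_of_local {D : ℕ} {S : Set (EuclideanSpace ℝ (Fin D))}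
    (c : ℝ → EuclideanSpace ℝ (Fin D)) (v : EuclideanSpace ℝ (Fin D))
    (h : ∀ᶠ t in nhds (0 : ℝ), ContDiffAt ℝ (⊤ : ℕ∞) c t ∧ c t ∈ S) (hv : HasDerivAt c v 0) :
    v ∈ TangentAt S (c 0) := by
  obtain ⟨δ, hδ, hδu⟩ := Metric.eventually_nhds_iff.1 h
  obtain ⟨s, hs, hs0, hs1, hsb⟩ := ggm_reparam δ hδ
  have hm : ∀ t, ContDiffAt ℝ (⊤ : ℕ∞) c (s t) ∧ c (s t) ∈ S := fun t =>
    hδu (by simpa using hsb t)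
  refine Submodule.subset_span ⟨fun t => c (s t), ?_, fun t => (hm t).2, by simp only [hs0], ?_⟩
  · rw [contDiff_iff_contDiffAt]
    exact fun t => (hm t).1.comp t hs.contDiffAt
  · have h1 := ggm_smooth_hasDerivAt hs 0
    rw [hs1] at h1
    rw [← hs0] at hv
    exact ((hv.scomp 0 h1).congr_deriv (one_smul _ _)).deriv

theorem ggm_tangent_spaceForm (k : SpaceFormKind) {D : ℕ} {q v : EuclideanSpace ℝ (Fin D)}
    (hq : q ∈ spaceForm k D) (hv : k ≠ .euclidean → ggmB k D v q = 0) :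
    v ∈ TangentAt (spaceForm k D) q := by
  by_cases hk : k = .euclidean
  · subst hk
    have h : HasDerivAt (fun t : ℝ => q + t • v) v 0 := by
      simpa using ((hasDerivAt_id (0 : ℝ)).smul_const v).const_add q
    have := ggm_tangent_of_local (S := spaceForm .euclidean D) (fun t : ℝ => q + t • v) v
      (Filter.Eventually.of_forall fun t => ⟨by fun_prop, trivial⟩) h
    simpa using this
  have hvq := hv hk
  obtain ⟨r, hr, hsq⟩ := ggm_sq k hk
  have hqq := hsq D q hq
  have hBvv : ∀ t : ℝ, ggmB k D (q + t • v) (q + t • v) = r + t ^ 2 * ggmB k D v v := by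
    intro t
    simp only [map_add, map_smul, _root_.add_apply, _root_.smul_apply,
      smul_eq_mul, hqq, hvq, ggmB_symm k q v]
    ring
  let g : ℝ → ℝ := fun t => 1 + t ^ 2 * (ggmB k D v v / r)
  have hg0 : g 0 = 1 := by simp [g]
  have hgs : ContDiff ℝ (⊤ : ℕ∞) g := by fun_prop
  have hgd : HasDerivAt g 0 0 := by
    have := ((hasDerivAt_pow 2 (0 : ℝ)).mul_const (ggmB k D v v / r)).const_add 1
    exact this.congr_deriv (by simp)
  have hgr : ∀ t, ggmB k D (q + t • v) (q + t • v) = r * g t := fun t => by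
    rw [hBvv]; simp only [g]; field_simp
  have hgpos : ∀ᶠ t in nhds (0 : ℝ), 0 < g t := by
    have := hgs.continuous.continuousAt (x := (0 : ℝ))
    exact this.eventually (lt_mem_nhds (by rw [hg0]; norm_num))
  let c : ℝ → EuclideanSpace ℝ (Fin D) := fun t => (Real.sqrt (g t))⁻¹ • (q + t • v)
  have hc0 : c 0 = q := by simp [c, hg0]
  have hcd : HasDerivAt c v 0 := by
    have h1 := (hgd.sqrt (by rw [hg0]; norm_num)).inv (by rw [hg0]; simp)
    have h2 : HasDerivAt (fun t : ℝ => q + t • v) v 0 := by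
      simpa using ((hasDerivAt_id (0 : ℝ)).smul_const v).const_add q
    have := h1.smul h2
    exact this.congr_deriv (by simp [hg0])
  have hBc : ∀ t, 0 < g t → ggmB k D (c t) (c t) = r := fun t ht => by
    have h1 : Real.sqrt (g t) ^ 2 = g t := Real.sq_sqrt ht.le
    have h2 : Real.sqrt (g t) ≠ 0 := (Real.sqrt_pos.2 ht).ne'
    simp only [c, map_smul, _root_.smul_apply, smul_eq_mul] at *
    rw [hgr]
    field_simp
    rw [h1]
  have hcm : ∀ᶠ t in nhds (0 : ℝ), c t ∈ spaceForm k D := by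
    cases k with
    | euclidean => exact absurd rfl hk
    | sphere =>
      filter_upwards [hgpos] with t ht
      have h := hBc t ht
      have hq' : ggmB .sphere D q q = 1 := by rw [ggmB_apply]; exact hq
      rw [← hqq, hq', ggmB_apply] at h
      exact h
    | hyperbolic =>
      have hl : ∀ᶠ t in nhds (0 : ℝ), ∀ i : Fin D, (i : ℕ) + 1 = D → 0 < c t i := by
        rw [Filter.eventually_all]
        intro i
        by_cases hi : (i : ℕ) + 1 = D
        · have h0 : 0 < c 0 i := by rw [hc0]; exact hq.2 i hi
          have hci : ContinuousAt (fun t => c t i) 0 :=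
            (EuclideanSpace.proj (𝕜 := ℝ) i).continuous.continuousAt.comp hcd.continuousAt
          filter_upwards [hci.eventually (lt_mem_nhds h0)] with t ht _ using ht
        · simp [hi]
      filter_upwards [hgpos, hl] with t ht hlt
      have h := hBc t ht
      have hq' : ggmB .hyperbolic D q q = -1 := by rw [ggmB_apply]; exact hq.1
      rw [← hqq, hq', ggmB_apply] at h
      exact ⟨h, hlt⟩
  have := ggm_tangent_of_local (S := spaceForm k D) c v ?_ hcd
  · rwa [hc0] at this
  · filter_upwards [hgpos, hcm] with t ht hm
    refine ⟨?_, hm⟩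
    have h1 : ContDiffAt ℝ (⊤ : ℕ∞) (fun t => Real.sqrt (g t)) t :=
      (hgs.contDiffAt).sqrt ht.ne'
    have h2 := h1.inv (Real.sqrt_pos.2 ht).ne'
    exact h2.smul (by fun_prop)

/-- the pulled back curve is smooth -/
theorem ggm_pullback {D n : ℕ} {S : Set (EuclideanSpace ℝ (Fin D))}
    {φ : EuclideanSpace ℝ (Fin n) → EuclideanSpace ℝ (Fin D)} {U : Set (EuclideanSpace ℝ (Fin n))}
    {p : EuclideanSpace ℝ (Fin D)} (h : IsLocalParam S n φ U p)
    {ψ : EuclideanSpace ℝ (Fin D) → EuclideanSpace ℝ (Fin n)} (hψc : ContinuousOn ψ (φ '' U))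
    (hψ : ∀ x ∈ U, ψ (φ x) = x) {c : ℝ → EuclideanSpace ℝ (Fin D)} {t : ℝ}
    (hc : ContDiffAt ℝ (⊤ : ℕ∞) c t) (hcU : ∀ᶠ r in nhds t, c r ∈ φ '' U) :
    ContDiffAt ℝ (⊤ : ℕ∞) (fun t => ψ (c t)) t := by
  have ht : c t ∈ φ '' U := hcU.self_of_nhds
  obtain ⟨x₀, hx₀, hφx₀⟩ := ht
  have hUn : U ∈ nhds x₀ := h.isOpen.mem_nhds hx₀
  have hφ : ContDiffAt ℝ (⊤ : ℕ∞) φ x₀ := (h.smooth x₀ hx₀).contDiffAt hUn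
  have hinj := h.immersion x₀ hx₀
  rw [fderivWithin_of_isOpen h.isOpen hx₀] at hinj
  obtain ⟨L, hL⟩ := LinearMap.exists_leftInverse_of_injective
    (fderiv ℝ φ x₀ : EuclideanSpace ℝ (Fin n) →ₗ[ℝ] EuclideanSpace ℝ (Fin D))
    (LinearMap.ker_eq_bot.2 hinj)
  let L' := LinearMap.toContinuousLinearMap L
  let f : EuclideanSpace ℝ (Fin n) → EuclideanSpace ℝ (Fin n) := fun x => L' (φ x)
  have hf : ContDiffAt ℝ (⊤ : ℕ∞) f x₀ := L'.contDiff.contDiffAt.comp x₀ hφ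
  have hf' : HasFDerivAt f ((ContinuousLinearEquiv.refl ℝ (EuclideanSpace ℝ (Fin n)) :
      EuclideanSpace ℝ (Fin n) ≃L[ℝ] EuclideanSpace ℝ (Fin n)) :
      EuclideanSpace ℝ (Fin n) →L[ℝ] EuclideanSpace ℝ (Fin n)) x₀ := by
    have h1 := L'.hasFDerivAt.comp x₀ (hφ.differentiableAt (by simp)).hasFDerivAt
    refine h1.congr_fderiv ?_
    ext1 x
    symm
    exact (LinearMap.congr_fun hL x).symm
  have hg := hf.to_localInverse hf' (by simp)
  have hfs : HasStrictFDerivAt f _ x₀ := hf.hasStrictFDerivAt' hf' (by simp)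
  have hev := hfs.eventually_left_inverse
  have hcont : Filter.Tendsto (fun r => ψ (c r)) (nhds t) (nhds x₀) := by
    have h1 : ContinuousWithinAt ψ (φ '' U) (c t) := hψc _ hcU.self_of_nhds
    have h2 : Filter.Tendsto c (nhds t) (nhdsWithin (c t) (φ '' U)) :=
      tendsto_nhdsWithin_iff.2 ⟨hc.continuousAt, hcU⟩
    have h3 := h1.tendsto.comp h2
    rw [← hφx₀, hψ x₀ hx₀] at h3
    exact h3
  have heq : (fun r => ψ (c r)) =ᶠ[nhds t]
      fun r => (hf.localInverse hf' (by simp)) (L' (c r)) := by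
    filter_upwards [hcont.eventually hev, hcU] with r hr hrU
    obtain ⟨x, hx, hxr⟩ := hrU
    have e : f (ψ (c r)) = L' (c r) := by
      simp only [f]
      rw [← hxr, hψ x hx]
    rw [e] at hr
    exact hr.symm
  refine ContDiffAt.congr_of_eventuallyEq ?_ heq
  have hbase : L' (c t) = f x₀ := by simp only [f, hφx₀]
  rw [← hbase] at hg
  exact hg.comp t (L'.contDiff.contDiffAt.comp t hc)

/-- The tangent space is the range of the differential of a local parametrization. -/
theorem ggm_tangent_range {D n : ℕ} {S : Set (EuclideanSpace ℝ (Fin D))}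
    {φ : EuclideanSpace ℝ (Fin n) → EuclideanSpace ℝ (Fin D)} {U : Set (EuclideanSpace ℝ (Fin n))}
    {p : EuclideanSpace ℝ (Fin D)} (h : IsLocalParam S n φ U p)
    {x : EuclideanSpace ℝ (Fin n)} (hx : x ∈ U) (w : EuclideanSpace ℝ (Fin D)) :
    w ∈ TangentAt S (φ x) ↔ ∃ a, w = fderiv ℝ φ x a := by
  obtain ⟨V, hVo, hV⟩ := h.openImage
  have hdiff : ∀ y ∈ U, ContDiffAt ℝ (⊤ : ℕ∞) φ y := fun y hy =>
    (h.smooth y hy).contDiffAt (h.isOpen.mem_nhds hy)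
  constructor
  · intro hw
    refine Submodule.span_induction (p := fun w _ => ∃ a, w = fderiv ℝ φ x a) ?_ ?_ ?_ ?_ hw
    · rintro w ⟨c, hc, hcS, h0, h1⟩
      obtain ⟨ψ, hψc, hψ⟩ := h.embedding
      have hcU : ∀ᶠ r in nhds (0 : ℝ), c r ∈ φ '' U := by
        have : c 0 ∈ V := by
          rw [h0]
          have : φ x ∈ φ '' U := ⟨x, hx, rfl⟩
          rw [hV] at this
          exact this.2
        filter_upwards [hc.continuous.continuousAt.eventually (hVo.mem_nhds this)] with r hr
        rw [hV]
        exact ⟨hcS r, hr⟩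
      have hpb := ggm_pullback h hψc hψ hc.contDiffAt hcU
      have hpd := (hpb.differentiableAt (by simp)).hasDerivAt
      have hx0 : ψ (c 0) = x := by rw [h0, hψ x hx]
      have hφd := ((hdiff x hx).differentiableAt (by simp)).hasFDerivAt
      have hφd' : HasFDerivAt φ (fderiv ℝ φ x) (ψ (c 0)) := by rw [hx0]; exact hφd
      have hcomp := hφd'.comp_hasDerivAt (0 : ℝ) hpd
      have heq : c =ᶠ[nhds 0] (φ ∘ fun t => ψ (c t)) := by
        filter_upwards [hcU] with r hr
        obtain ⟨y, hy, hyr⟩ := hr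
        simp only [Function.comp_apply]
        rw [← hyr, hψ y hy]
      exact ⟨_, h1.symm.trans (hcomp.congr_of_eventuallyEq heq).deriv⟩
    · exact ⟨0, by simp⟩
    · rintro _ _ _ _ ⟨a, rfl⟩ ⟨b, rfl⟩
      exact ⟨a + b, by simp⟩
    · rintro r _ _ ⟨a, rfl⟩
      exact ⟨r • a, by simp⟩
  · rintro ⟨a, rfl⟩
    have hline : HasDerivAt (fun t : ℝ => x + t • a) a 0 := by
      simpa using ((hasDerivAt_id (0 : ℝ)).smul_const a).const_add x
    have hφd := ((hdiff x hx).differentiableAt (by simp)).hasFDerivAt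
    have hφd' : HasFDerivAt φ (fderiv ℝ φ x) ((fun t : ℝ => x + t • a) 0) := by simpa using hφd
    have hcomp := hφd'.comp_hasDerivAt (0 : ℝ) hline
    have hU : ∀ᶠ t in nhds (0 : ℝ), x + t • a ∈ U := by
      apply hline.continuousAt.eventually
      simpa using h.isOpen.mem_nhds hx
    have := ggm_tangent_of_local (S := S) _ _ ?_ hcomp
    · simpa using this
    · filter_upwards [hU] with t ht
      refine ⟨(hdiff _ ht).comp t (by fun_prop), ?_⟩
      have : φ (x + t • a) ∈ φ '' U := ⟨_, ht, rfl⟩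
      rw [hV] at this
      exact this.1

theorem ggm_comp_deriv {V : Type*} [NormedAddCommGroup V] [NormedSpace ℝ V] {f : ℝ → V}
    (hf : ContDiff ℝ (⊤ : ℕ∞) f) {s : ℝ → ℝ} (hs : ContDiff ℝ (⊤ : ℕ∞) s) (hs0 : s 0 = 0)
    (hs1 : deriv s 0 = 1) : deriv (fun t => f (s t)) 0 = deriv f 0 := by
  have h1 := ggm_smooth_hasDerivAt hs 0
  have h2 := ggm_smooth_hasDerivAt hf (s 0)
  rw [hs1] at h1
  have h3 := ((h2.scomp 0 h1).congr_deriv (one_smul _ _)).deriv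
  rw [hs0] at h3
  exact h3

/-- number of radial directions -/
def ggmRad (k : SpaceFormKind) : ℕ :=
  match k with
  | .euclidean => 0
  | _ => 1

theorem ggmRad_radial (k : SpaceFormKind) {D : ℕ} (q : EuclideanSpace ℝ (Fin D))
    (b : Fin (ggmRad k) → ℝ) : (∑ i, b i) • q ∈ radialAt k q := by
  cases k with
  | euclidean =>
    have : (∑ i, b i) = 0 := by
      exact Finset.sum_of_isEmpty (ι := Fin 0) _
    rw [this, zero_smul]
    exact Submodule.zero_mem _
  | sphere => exact Submodule.smul_mem _ _ (Submodule.mem_span_singleton_self q)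
  | hyperbolic => exact Submodule.smul_mem _ _ (Submodule.mem_span_singleton_self q)

theorem ggmRad_euclidean {k : SpaceFormKind} (hk : k = .euclidean) (b : Fin (ggmRad k) → ℝ) :
    (∑ i, b i) = 0 := by
  subst hk
  exact Finset.sum_of_isEmpty (ι := Fin 0) _

theorem ggmRad_exists {k : SpaceFormKind} (hk : k ≠ .euclidean) :
    ∃ b : Fin (ggmRad k) → ℝ, (∑ i, b i) = 1 := by
  cases k with
  | euclidean => exact absurd rfl hk
  | sphere => exact ⟨fun _ => 1, by change ∑ i : Fin 1, (1 : ℝ) = 1; simp⟩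
  | hyperbolic => exact ⟨fun _ => 1, by change ∑ i : Fin 1, (1 : ℝ) = 1; simp⟩

theorem ggmRad_inj {k : SpaceFormKind} (b : Fin (ggmRad k) → ℝ) (h : (∑ i, b i) = 0) : b = 0 := by
  cases k with
  | euclidean =>
    change Fin 0 → ℝ at b
    exact Subsingleton.elim (α := Fin 0 → ℝ) _ _
  | sphere =>
    change Fin 1 → ℝ at b
    change ∑ i : Fin 1, b i = 0 at h
    change b = fun _ => (0 : ℝ)
    funext i
    rw [Fin.sum_univ_one] at h
    rw [Fin.eq_zero i, h]
  | hyperbolic =>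
    change Fin 1 → ℝ at b
    change ∑ i : Fin 1, b i = 0 at h
    change b = fun _ => (0 : ℝ)
    funext i
    rw [Fin.sum_univ_one] at h
    rw [Fin.eq_zero i, h]

/-- A moving frame of (tangent + radial) along a reparametrization of a curve. -/
theorem ggm_frame {D n : ℕ} {S : Set (EuclideanSpace ℝ (Fin D))}
    (hsub : IsSubmanifold S n)
    (c : ℝ → EuclideanSpace ℝ (Fin D)) (hc : ContDiff ℝ (⊤ : ℕ∞) c) (hcS : ∀ t, c t ∈ S) :
    ∃ s : ℝ → ℝ, ContDiff ℝ (⊤ : ℕ∞) s ∧ s 0 = 0 ∧ deriv s 0 = 1 ∧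
    ∃ T : ℝ → EuclideanSpace ℝ (Fin n) →L[ℝ] EuclideanSpace ℝ (Fin D),
      ContDiff ℝ (⊤ : ℕ∞) T ∧ (∀ t, Function.Injective (T t)) ∧
      ∀ t w, w ∈ TangentAt S (c (s t)) ↔ ∃ a, w = T t a := by
  obtain ⟨φ, U, h⟩ := hsub (c 0) (hcS 0)
  obtain ⟨V, hVo, hV⟩ := h.openImage
  obtain ⟨ψ, hψc, hψ⟩ := h.embedding
  have hcV : c 0 ∈ V := by
    have := h.mem
    rw [hV] at this
    exact this.2
  obtain ⟨δ, hδ, hδu⟩ := Metric.eventually_nhds_iff.1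
    (hc.continuous.continuousAt.eventually (hVo.mem_nhds hcV))
  obtain ⟨s, hs, hs0, hs1, hsb⟩ := ggm_reparam δ hδ
  have hcU : ∀ t, c (s t) ∈ φ '' U := fun t => by
    rw [hV]
    exact ⟨hcS _, hδu (by simpa using hsb t)⟩
  have hxU : ∀ t, ψ (c (s t)) ∈ U ∧ φ (ψ (c (s t))) = c (s t) := fun t => by
    obtain ⟨x, hx, hxe⟩ := hcU t
    rw [← hxe, hψ x hx]
    exact ⟨hx, rfl⟩
  have hx : ContDiff ℝ (⊤ : ℕ∞) (fun t => ψ (c (s t))) := by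
    rw [contDiff_iff_contDiffAt]
    intro t
    exact ggm_pullback h hψc hψ (c := fun t => c (s t)) (hc.comp hs).contDiffAt
      (Filter.Eventually.of_forall hcU)
  refine ⟨s, hs, hs0, hs1, fun t => fderiv ℝ φ (ψ (c (s t))), ?_, ?_, ?_⟩
  · rw [contDiff_iff_contDiffAt]
    intro t
    have h1 : ContDiffAt ℝ (⊤ : ℕ∞) (fderiv ℝ φ) (ψ (c (s t))) := by
      have := (h.smooth _ (hxU t).1).contDiffAt (h.isOpen.mem_nhds (hxU t).1)
      exact this.fderiv_right (by simp)
    exact h1.comp t hx.contDiffAt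
  · intro t
    have := h.immersion _ (hxU t).1
    rwa [fderivWithin_of_isOpen h.isOpen (hxU t).1] at this
  · intro t w
    have := ggm_tangent_range h (hxU t).1 w
    rwa [(hxU t).2] at this

/-- Key step: sections of `ν₁` along a curve in a generalized nullity direction are stationary. -/
theorem ggm_forward (k : SpaceFormKind) {D n m : ℕ} {S : Set (EuclideanSpace ℝ (Fin D))}
    {ν₁ : EuclideanSpace ℝ (Fin D) → Submodule ℝ (EuclideanSpace ℝ (Fin D))}
    (hSF : S ⊆ spaceForm k D) (hsub : IsSubmanifold S n)
    (hb : IsParallelNormalSubbundle k S ν₁ m) (p v : EuclideanSpace ℝ (Fin D))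
    (hv : v ∈ gNullityAt k S ν₁ p)
    (c ξ : ℝ → EuclideanSpace ℝ (Fin D)) (hc : ContDiff ℝ (⊤ : ℕ∞) c) (hcS : ∀ t, c t ∈ S)
    (hc0 : c 0 = p) (hc1 : deriv c 0 = v) (hξ : ContDiff ℝ (⊤ : ℕ∞) ξ)
    (hξν : ∀ t, ξ t ∈ ν₁ (c t)) : deriv ξ 0 ∈ ν₁ p := by
  obtain ⟨s₁, hs₁, hs₁0, hs₁1, T, hT, hTinj, hTan⟩ := ggm_frame hsub c hc hcS
  let B := ggmB k D
  let sumL : (Fin (ggmRad k) → ℝ) →L[ℝ] ℝ := ∑ i, ContinuousLinearMap.proj i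
  have hsumL : ∀ b, sumL b = ∑ i, b i := fun b => by simp [sumL]
  let E : ℝ → (EuclideanSpace ℝ (Fin n) × (Fin (ggmRad k) → ℝ)) →L[ℝ] EuclideanSpace ℝ (Fin D) :=
    fun t => (T t).comp (ContinuousLinearMap.fst ℝ _ _) +
      ((ContinuousLinearMap.toSpanSingleton ℝ (c (s₁ t))).comp sumL).comp
        (ContinuousLinearMap.snd ℝ _ _)
  have hEa : ∀ t a b, E t (a, b) = T t a + (∑ i, b i) • c (s₁ t) := fun t a b => by
    simp [E, hsumL, Finset.sum_smul]
  have hc₁ : ContDiff ℝ (⊤ : ℕ∞) (fun t => c (s₁ t)) := hc.comp hs₁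
  have hE : ContDiff ℝ (⊤ : ℕ∞) E := by
    refine (hT.clm_comp contDiff_const).add ((ContDiff.clm_comp ?_ contDiff_const).clm_comp
      contDiff_const)
    exact ((ContinuousLinearMap.toSpanSingletonCLE (𝕜 := ℝ)
      (E := EuclideanSpace ℝ (Fin D))).contDiff).comp hc₁
  have hTt : ∀ t a, T t a ∈ TangentAt S (c (s₁ t)) := fun t a => (hTan t _).2 ⟨a, rfl⟩
  have hrad : ∀ q ∈ S, ∀ w ∈ TangentAt S q, k ≠ .euclidean → B w q = 0 := fun q hq w hw hk =>
    ggm_tangent_radial k hk (ggm_tangent_mono hSF q hw)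
  -- nondegeneracy
  have hnd : ∀ t x, (∀ y, B (E t x) (E t y) = 0) → x = 0 := by
    rintro t ⟨a, b⟩ h
    have hq : c (s₁ t) ∈ S := hcS _
    have h0 : E t (a, b) = 0 := by
      refine ggm_nondeg k (hSF hq) (h _) fun hk => ?_
      obtain ⟨b', hb'⟩ := ggmRad_exists hk
      have := h (0, b')
      rw [hEa t 0 b', hb'] at this
      simpa using this
    have hb0 : (∑ i, b i) = 0 := by
      by_cases hk : k = .euclidean
      · exact ggmRad_euclidean hk b
      · obtain ⟨r, hr, hsq⟩ := ggm_sq k hk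
        have h1 : B (E t (a, b)) (c (s₁ t)) = 0 := by rw [h0]; simp
        rw [hEa, map_add, map_smul, _root_.add_apply, _root_.smul_apply,
          hrad _ hq _ (hTt t a) hk, hsq D _ (hSF hq)] at h1
        simpa [hr] using h1
    rw [hEa, hb0, zero_smul, add_zero] at h0
    have ha : a = 0 := hTinj t (by rw [h0, map_zero])
    rw [ha, ggmRad_inj b hb0]
    rfl
  obtain ⟨s₂, Φ, hs₂, hs₂0, hs₂1, hΦ, hΦ0, hu, htr⟩ := ggm_transport B E hE hnd
  -- the twice reparametrized curve and section
  let c₂ : ℝ → EuclideanSpace ℝ (Fin D) := fun t => c (s₁ (s₂ t))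
  let ξ₂ : ℝ → EuclideanSpace ℝ (Fin D) := fun t => ξ (s₁ (s₂ t))
  have hc₂ : ContDiff ℝ (⊤ : ℕ∞) c₂ := hc₁.comp hs₂
  have hξ₂ : ContDiff ℝ (⊤ : ℕ∞) ξ₂ := (hξ.comp hs₁).comp hs₂
  have hc₂0 : c₂ 0 = p := by simp only [c₂, hs₂0, hs₁0, hc0]
  have hc₂1 : deriv c₂ 0 = v := by
    rw [← hc1, ← ggm_comp_deriv hc hs₁ hs₁0 hs₁1]
    exact ggm_comp_deriv hc₁ hs₂ hs₂0 hs₂1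
  have hξ₂1 : deriv ξ₂ 0 = deriv ξ 0 := by
    rw [← ggm_comp_deriv hξ hs₁ hs₁0 hs₁1]
    exact ggm_comp_deriv (hξ.comp hs₁) hs₂ hs₂0 hs₂1
  have hc₂S : ∀ t, c₂ t ∈ S := fun t => hcS _
  have hξ₂ν : ∀ t, ξ₂ t ∈ ν₁ (c₂ t) := fun t => hξν _
  have hpS : p ∈ S := hc₂0 ▸ hc₂S 0
  have hE0 : ∀ a b, E 0 (a, b) = T 0 a + (∑ i, b i) • p := fun a b => by
    rw [hEa, hs₁0, hc0]
  have hT0 : ∀ a, T 0 a ∈ TangentAt S p := fun a => by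
    have := hTt 0 a
    rwa [hs₁0, hc0] at this
  -- normal vectors are orthogonal to tangent and radial ones
  have hnorm : ∀ q ∈ S, ∀ η ∈ ν₁ q, (∀ w ∈ TangentAt S q, B η w = 0) ∧
      (k ≠ .euclidean → B η q = 0) := fun q hq η hη => by
    have h := hb.normal q hq η hη
    exact ⟨fun w hw => (ggmB_apply k η w).trans (h.2 w hw), fun hk => ggm_tangent_radial k hk h.1⟩
  have hν0 : ∀ η ∈ ν₁ p, ∀ y, B η (E 0 y) = 0 := by
    rintro η hη ⟨a, b⟩
    obtain ⟨h1, h2⟩ := hnorm p hpS η hη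
    rw [hE0, map_add, map_smul, h1 _ (hT0 a)]
    by_cases hk : k = .euclidean
    · simp [ggmRad_euclidean hk b]
    · simp [h2 hk]
  -- parallel transport preserves ν₁
  have hpar : ∀ η ∈ ν₁ p, ∀ t, Φ t η ∈ ν₁ (c₂ t) := by
    intro η hη
    have hder : ∀ t, HasDerivAt (fun t => Φ t η) (deriv Φ t η) t := fun t =>
      ((ggm_smooth_hasDerivAt hΦ t).clm_apply (hasDerivAt_const t η)).congr_deriv (by simp)
    refine hb.parallel c₂ (fun t => Φ t η) hc₂ hc₂S (hΦ.clm_apply contDiff_const) ?_ ?_ ?_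
    · intro t
      have h := (htr η (hν0 η hη) t).1
      constructor
      · refine ggm_tangent_spaceForm k (hSF (hc₂S t)) fun hk => ?_
        obtain ⟨b', hb'⟩ := ggmRad_exists hk
        have := h (0, b')
        rw [hEa, hb'] at this
        simpa using this
      · intro w hw
        obtain ⟨a, rfl⟩ := (hTan (s₂ t) w).1 hw
        have := h (a, 0)
        rw [hEa] at this
        rw [← ggmB_apply]
        simpa using this
    · intro t
      rw [(hder t).deriv]
      obtain ⟨⟨a, b⟩, hab⟩ := (htr η (hν0 η hη) t).2
      rw [hab, hEa]
      exact Submodule.add_mem_sup (hTt _ a) (ggmRad_radial k _ b)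
    · simp only [hΦ0, hc₂0]
      exact hη
  have hsurj : ∀ t, ∀ x ∈ ν₁ (c₂ t), Ring.inverse (Φ t) x ∈ ν₁ p := by
    intro t x hx
    have hinj : Function.Injective (Φ t) := by
      intro x y hxy
      have := congrArg (fun z => (Ring.inverse (Φ t) : EuclideanSpace ℝ (Fin D) →L[ℝ] EuclideanSpace ℝ (Fin D)) z) hxy
      have e := Ring.inverse_mul_cancel _ (hu t)
      have e' : ∀ z, Ring.inverse (Φ t) (Φ t z) = z := fun z =>
        congrArg (fun f : EuclideanSpace ℝ (Fin D) →L[ℝ] EuclideanSpace ℝ (Fin D) => f z) e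
      simpa only [e'] using this
    have hle : (ν₁ p).map (Φ t : EuclideanSpace ℝ (Fin D) →ₗ[ℝ] EuclideanSpace ℝ (Fin D))
        ≤ ν₁ (c₂ t) := by
      rintro _ ⟨y, hy, rfl⟩
      exact hpar y hy t
    have hdim : Module.finrank ℝ ((ν₁ p).map
        (Φ t : EuclideanSpace ℝ (Fin D) →ₗ[ℝ] EuclideanSpace ℝ (Fin D)))
        = Module.finrank ℝ (ν₁ (c₂ t)) := by
      rw [hb.rank _ (hc₂S t), ← hb.rank p hpS]
      exact (Submodule.equivMapOfInjective _ hinj (ν₁ p)).finrank_eq.symm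
    have heq := Submodule.eq_of_le_of_finrank_eq hle hdim
    rw [← heq] at hx
    obtain ⟨y, hy, rfl⟩ := hx
    have e := Ring.inverse_mul_cancel _ (hu t)
    have e' : Ring.inverse (Φ t) (Φ t y) = y :=
      congrArg (fun f : EuclideanSpace ℝ (Fin D) →L[ℝ] EuclideanSpace ℝ (Fin D) => f y) e
    change Ring.inverse (Φ t) (Φ t y) ∈ ν₁ p
    rw [e']
    exact hy
  let ζ : ℝ → EuclideanSpace ℝ (Fin D) := fun t => Ring.inverse (Φ t) (ξ₂ t)
  have hζν : ∀ t, ζ t ∈ ν₁ p := fun t => hsurj t _ (hξ₂ν t)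
  have hζd : DifferentiableAt ℝ ζ 0 := by
    obtain ⟨u, hu0⟩ := hu 0
    have h1 : DifferentiableAt ℝ (fun t => Ring.inverse (Φ t)) 0 := by
      have h := (hasFDerivAt_ringInverse (𝕜 := ℝ) u).differentiableAt
      rw [hu0] at h
      exact h.comp (0 : ℝ) (hΦ.differentiable (by simp) 0)
    exact h1.clm_apply (hξ₂.differentiable (by simp) 0)
  have hζ' : deriv ζ 0 ∈ ν₁ p := by
    have hcl : IsClosed (ν₁ p : Set (EuclideanSpace ℝ (Fin D))) := (ν₁ p).closed_of_finiteDimensional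
    refine hcl.mem_of_tendsto hζd.hasDerivAt.tendsto_slope (Filter.Eventually.of_forall fun t => ?_)
    rw [slope_def_module]
    exact Submodule.smul_mem _ _ (Submodule.sub_mem _ (hζν t) (hζν 0))
  have hΦζ : ∀ t, Φ t (ζ t) = ξ₂ t := fun t =>
    congrArg (fun f : EuclideanSpace ℝ (Fin D) →L[ℝ] EuclideanSpace ℝ (Fin D) => f (ξ₂ t))
      (Ring.mul_inverse_cancel _ (hu t))
  have hζ0 : ζ 0 = ξ₂ 0 := by
    rw [← hΦζ 0, hΦ0]; rfl
  have hsum : deriv ξ₂ 0 = deriv Φ 0 (ξ₂ 0) + deriv ζ 0 := by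
    have h := ((ggm_smooth_hasDerivAt hΦ 0).clm_apply hζd.hasDerivAt).deriv
    rw [show (fun t => Φ t (ζ t)) = ξ₂ from funext hΦζ, hΦ0, hζ0] at h
    exact h
  have hξ0p : ξ₂ 0 ∈ ν₁ p := by
    have := hξ₂ν 0
    rwa [hc₂0] at this
  obtain ⟨x, hx⟩ := (htr (ξ₂ 0) (hν0 _ hξ0p) 0).2
  rw [hs₂0] at hx
  have hξd := ggm_smooth_hasDerivAt hξ₂ 0
  -- derivative of ξ is orthogonal to tangent and radial vectors
  have horth : ∀ y, B (deriv ξ₂ 0) (E 0 y) = 0 := by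
    rintro ⟨a, b⟩
    have hW : ContDiff ℝ (⊤ : ℕ∞) (fun t => T (s₂ t) a) :=
      (hT.comp hs₂).clm_apply contDiff_const
    have hWt : ∀ t, T (s₂ t) a ∈ TangentAt S (c₂ t) := fun t => hTt _ _
    have h1 := hv.2 c₂ _ hc₂ hc₂S hc₂0 hc₂1 hW hWt (ξ₂ 0) hξ0p
    rw [← ggmB_apply, ggmB_symm] at h1
    have h2 := ggmB_deriv_const k hξd (ggm_smooth_hasDerivAt hW 0) 0
      (fun t => (hnorm _ (hc₂S t) _ (hξ₂ν t)).1 _ (hWt t))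
    rw [h1, zero_add, hs₂0] at h2
    rw [hE0, map_add, map_smul]
    change ggmB k D _ _ + _ = _
    rw [h2]
    by_cases hk : k = .euclidean
    · simp [ggmRad_euclidean hk b]
    · have h3 := ggmB_deriv_const k hξd (ggm_smooth_hasDerivAt hc₂ 0) 0
        (fun t => (hnorm _ (hc₂S t) _ (hξ₂ν t)).2 hk)
      have h4 : ggmB k D (ξ₂ 0) v = 0 := (hnorm p hpS _ hξ0p).1 v hv.1
      rw [hc₂1, hc₂0, h4, zero_add] at h3
      simp [B, h3]
  have hx0 : x = 0 := by
    refine hnd 0 x fun y => ?_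
    have h1 := horth y
    rw [hsum, map_add, _root_.add_apply, hν0 _ hζ' y, add_zero, hx] at h1
    exact h1
  rw [hx0, map_zero] at hx
  rw [← hξ₂1, hsum, hx, zero_add]
  exact hζ'

theorem ggm_backward (k : SpaceFormKind) {D m : ℕ} {S : Set (EuclideanSpace ℝ (Fin D))}
    {ν₁ : EuclideanSpace ℝ (Fin D) → Submodule ℝ (EuclideanSpace ℝ (Fin D))}
    (hb : IsParallelNormalSubbundle k S ν₁ m) (p v : EuclideanSpace ℝ (Fin D))
    (h : ∀ c ξ : ℝ → EuclideanSpace ℝ (Fin D),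
          ContDiff ℝ (⊤ : ℕ∞) c → (∀ t, c t ∈ S) → c 0 = p → deriv c 0 = v →
          ContDiff ℝ (⊤ : ℕ∞) ξ → (∀ t, ξ t ∈ ν₁ (c t)) →
          deriv ξ 0 ∈ ν₁ p)
    (c W : ℝ → EuclideanSpace ℝ (Fin D)) (hc : ContDiff ℝ (⊤ : ℕ∞) c) (hcS : ∀ t, c t ∈ S)
    (hc0 : c 0 = p) (hc1 : deriv c 0 = v) (hW : ContDiff ℝ (⊤ : ℕ∞) W)
    (hWt : ∀ t, W t ∈ TangentAt S (c t)) (η : EuclideanSpace ℝ (Fin D)) (hη : η ∈ ν₁ p) :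
    aForm k (deriv W 0) η = 0 := by
  have hpS : p ∈ S := hc0 ▸ hcS 0
  obtain ⟨V, hV, f, hf, hfν⟩ := hb.smooth p hpS
  have hpV : p ∈ V := mem_of_mem_nhds hV
  obtain ⟨δ, hδ, hδu⟩ := Metric.eventually_nhds_iff.1
    ((hc.continuous.continuousAt (x := (0 : ℝ))).eventually (p := fun q => q ∈ V)
      (by rw [hc0]; exact hV))
  obtain ⟨s, hs, hs0, hs1, hsb⟩ := ggm_reparam δ hδ
  have hcV : ∀ t, c (s t) ∈ V := fun t => hδu (by simpa using hsb t)
  rw [hfν p ⟨hpV, hpS⟩] at hη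
  obtain ⟨a, rfl⟩ := (Submodule.mem_span_range_iff_exists_fun ℝ).1 hη
  rw [← hfν p ⟨hpV, hpS⟩] at hη
  have hcs : ContDiff ℝ (⊤ : ℕ∞) (fun t => c (s t)) := hc.comp hs
  have hWs : ContDiff ℝ (⊤ : ℕ∞) (fun t => W (s t)) := hW.comp hs
  let X : ℝ → EuclideanSpace ℝ (Fin D) := fun t => ∑ i, a i • f i (c (s t))
  have hX : ContDiff ℝ (⊤ : ℕ∞) X :=
    ContDiff.sum fun i _ => ((hf i).comp hcs).const_smul (a i)
  have hX0 : X 0 = ∑ i, a i • f i p := by simp only [X, hs0, hc0]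
  have hXν : ∀ t, X t ∈ ν₁ (c (s t)) := fun t => by
    rw [hfν _ ⟨hcV t, hcS _⟩]
    exact (Submodule.mem_span_range_iff_exists_fun ℝ).2 ⟨a, rfl⟩
  have h1 := h _ X hcs (fun t => hcS _) (by simp only [hs0, hc0])
    (by rw [ggm_comp_deriv hc hs hs0 hs1, hc1]) hX hXν
  have hd := ggmB_deriv_const k (ggm_smooth_hasDerivAt hX 0) (ggm_smooth_hasDerivAt hWs 0) 0
    (fun t => by
      rw [ggmB_apply]
      exact (hb.normal _ (hcS _) _ (hXν t)).2 _ (hWt _))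
  have hW0 : W 0 ∈ TangentAt S p := hc0 ▸ hWt 0
  have h2 : ggmB k D (deriv X 0) (W 0) = 0 := by
    rw [ggmB_apply]
    exact (hb.normal p hpS _ h1).2 _ hW0
  rw [hs0, h2, add_zero, ggm_comp_deriv hW hs hs0 hs1, hX0, ggmB_symm, ggmB_apply] at hd
  exact hd

/-- **The kernel of the generalized Gauss map is the generalized nullity space.**
Let `M = S` be an `n`-dimensional submanifold of a space form, and let `ν₁` be a parallel rank `m`
sub-bundle of the normal bundle of `M`.  Consider the generalized Gauss map `G₁ : p ↦ ν₁(p)` into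
the Grassmannian of `m`-dimensional linear subspaces of the ambient linear space.  Then, for every
`p ∈ M`, the kernel of the differential `d(G₁)_p` equals the generalized nullity space `𝒩¹_p`,
the common kernel of the shape operators of vectors in `ν₁(p)`.  Here a tangent vector `v` lies in
the kernel of `d(G₁)_p` iff for every smooth curve `c` in `S` with `c(0) = p`, `c'(0) = v`, the
family of subspaces `ν₁(c(t))` is stationary at `t = 0`, i.e. every smooth section `ξ` of `ν₁`
along `c` has `ξ'(0) ∈ ν₁(p)`. -/
theorem generalized_gauss_map_kernel (k : SpaceFormKind) (n codim m : ℕ)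
    (S : Set (EuclideanSpace ℝ (Fin (ambientDim k n codim))))
    (ν₁ : EuclideanSpace ℝ (Fin (ambientDim k n codim)) →
      Submodule ℝ (EuclideanSpace ℝ (Fin (ambientDim k n codim))))
    (hSF : S ⊆ spaceForm k (ambientDim k n codim))
    (hsub : IsSubmanifold S n)
    (hbundle : IsParallelNormalSubbundle k S ν₁ m) :
    ∀ p ∈ S, ∀ v : EuclideanSpace ℝ (Fin (ambientDim k n codim)),
      (v ∈ gNullityAt k S ν₁ p ↔
        v ∈ TangentAt S p ∧
        ∀ c ξ : ℝ → EuclideanSpace ℝ (Fin (ambientDim k n codim)),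
          ContDiff ℝ (⊤ : ℕ∞) c → (∀ t, c t ∈ S) → c 0 = p → deriv c 0 = v →
          ContDiff ℝ (⊤ : ℕ∞) ξ → (∀ t, ξ t ∈ ν₁ (c t)) →
          deriv ξ 0 ∈ ν₁ p) := by
  intro p hp v
  constructor
  · intro hv
    exact ⟨hv.1, fun c ξ hc hcS hc0 hc1 hξ hξν =>
      ggm_forward k hSF hsub hbundle p v hv c ξ hc hcS hc0 hc1 hξ hξν⟩
  · rintro ⟨hv, h⟩
    exact ⟨hv, fun c W hc hcS hc0 hc1 hW hWt η hη =>
      ggm_backward k hbundle p v h c W hc hcS hc0 hc1 hW hWt η hη⟩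
end
end
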